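/- arXiv:1508.01251 — 5 statements merged into one kernel-verified Lean document; each statement's English description precedes it below -/
import Mathlib

section
/- Let 𝕜 be an algebraically closed field of characteristic zero, let G be a finite group, and let d ≥ 1 be an integer. Then there exists a division ring D which is a 𝕜-algebra (so that 𝕜 lies in the center Z(D)), of degree d over its center (i.e. dim_{Z(D)} D = d²), admitting a faithful grading by G, if and only if G contains a normal abelian subgroup whose index divides d. -/
/-! Let `D` be a division ring faithfully graded by a finite group `G`.

*From a grading to a subgroup.* Let `T = D_1`, with center `L`. Conjugation by nonzero homogeneous
elements makes `G` act on the field `L`; let `A` (`Grd.inertia`) be the kernel of this action. By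
Skolem–Noether each `D_a` with `a ∈ A` contains a nonzero element commuting with `T`
(`Grd.exists_commuting`). Such elements form a group that is a central extension of `A`, so by
Schur's theorem their commutators have finite order; they are therefore roots of unity, lie in the
algebraically closed field `𝕜 ⊆ D_1`, and `A` is abelian (`Grd.inertia_comm`). Grading `D` by `G ⧸ A`,
Galois theory gives `dim_{Z(D)} D = [G : A]² · dim_{L'} T'`, where `T'` is the new unit component
and `L'` its center (`Grd.finrank_center`), whence `[G : A]` divides `d`.

*From a subgroup to a grading.* Suppose first that `[G : A] = d`. Let `F` be a free group mapping
onto `G`, `S` the preimage of `A`, and `Γ = F ⧸ [S, S]`, which still maps onto `G`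
(`exists_extension`). The preimage of `A` in `Γ` is abelian and self-centralizing, and the preimage of
each solvable subgroup of `G` has the unique product property, as it is built from free abelian groups;
so the parts of `𝕜[Γ]` graded by solvable subgroups are domains. Inverting the nonzero central elements
of degree `1` gives a crossed product of `G` over a field, and it is a division ring because its parts
graded by Sylow subgroups are: the dimension of any left ideal is divisible by `|G|`
(`Grd.isUnit_of_sylow`). Its degree is `[G : A]`, again by `Grd.finrank_center`
(`Grd.exists_divisionRing`). If `d = [G : A] · m`, apply this to `A × 1` in `G × ℤ/m` and forget the
`ℤ/m`-part of the grading. -/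

/-! ### The Skolem–Noether theorem -/

/-- If the `b i` are independent over the center of `E`, the maps `y ↦ y * b i` are left
`E`-independent. -/
theorem mul_mul_independent {E : Type*} [DivisionRing E] {ι : Type*} (b : ι → E)
    (hb : LinearIndependent (Subring.center E) b) (s : Finset ι) :
    ∀ c : ι → E, (∀ y, ∑ i ∈ s, c i * y * b i = 0) → ∀ i ∈ s, c i = 0 := by
  classical
  induction s using Finset.induction_on with
  | empty => simp
  | insert j s hj ih =>
    intro c hc
    have hcj : c j = 0 := by
      by_contra hne
      -- after normalising `c j = 1`, commuting with `z` kills the `j`-th term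
      have hc1 : ∀ y, y * b j + ∑ i ∈ s, ((c j)⁻¹ * c i) * y * b i = 0 := by
        intro y
        have := congrArg (fun t => (c j)⁻¹ * t) (hc y)
        simp only [Finset.sum_insert hj, mul_add, mul_zero, Finset.mul_sum] at this
        rw [← mul_assoc, ← mul_assoc, inv_mul_cancel₀ hne, one_mul] at this
        simpa only [mul_assoc] using this
      have hcomm : ∀ i ∈ s, (c j)⁻¹ * c i ∈ Subring.center E := by
        intro i hi
        rw [Subring.mem_center_iff]
        intro z
        have key := ih (fun i => (c j)⁻¹ * c i * z - z * ((c j)⁻¹ * c i)) (by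
          intro y
          have h1 := hc1 (z * y)
          have h2 := congrArg (fun t => z * t) (hc1 y)
          simp only [mul_add, mul_zero, Finset.mul_sum] at h2
          have h3 := congrArg₂ (fun a b => a - b) h1 h2
          simp only [mul_assoc, add_sub_add_left_eq_sub, sub_zero] at h3
          rw [← h3, ← Finset.sum_sub_distrib]
          refine Finset.sum_congr rfl fun i _ => ?_
          simp only [sub_mul, mul_assoc]) i hi
        exact (sub_eq_zero.mp key).symm
      have h1 := hc1 1
      let f : ι → Subring.center E := fun i =>
        if hi : i ∈ s then ⟨(c j)⁻¹ * c i, hcomm i hi⟩ else 1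
      have hf := linearIndependent_iff'.mp hb (insert j s) f (by
        rw [Finset.sum_insert hj, ← h1]
        congr 1
        · simp only [f, hj, dite_false, one_smul, one_mul]
        · refine Finset.sum_congr rfl fun i hi => ?_
          simp only [f, hi, dite_true, Subring.smul_def, smul_eq_mul, mul_one]) j
          (Finset.mem_insert_self _ _)
      simp [f, hj] at hf
    intro i hi
    rcases Finset.mem_insert.mp hi with rfl | hi
    · exact hcj
    · refine ih c (fun y => ?_) i hi
      have := hc y
      rwa [Finset.sum_insert hj, hcj, zero_mul, zero_mul, zero_add] at this

/-- Skolem–Noether for an endomorphism `σ` fixing the center of `E`. By dimension count the right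
multiplications span `End_{Z(E)}(E)` over `E` acting on the left, so `σ` is a combination
`y ↦ ∑ cᵢ * y * bᵢ`; comparing coefficients in `σ (x * y) = σ x * σ y` gives `σ x * cᵢ = cᵢ * x`. -/
theorem skolem_noether_divisionRing {E : Type*} [DivisionRing E]
    [Module.Finite (Subring.center E) E] (σ : E →+* E)
    (hσ : ∀ z ∈ Subring.center E, σ z = z) : ∃ u : E, u ≠ 0 ∧ ∀ x, σ x * u = u * x := by
  classical
  let F := Subring.center E
  let b := Module.finBasis F E
  let R : Fin (Module.finrank F E) → (E →ₗ[F] E) := fun i =>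
    { toFun := fun y => y * b i
      map_add' := fun x y => add_mul _ _ _
      map_smul' := fun c y => by simp [Subring.smul_def, mul_assoc] }
  have hR : LinearIndependent E R := by
    rw [Fintype.linearIndependent_iff]
    intro c hc i
    refine mul_mul_independent b b.linearIndependent Finset.univ c (fun y => ?_) i
      (Finset.mem_univ _)
    have := LinearMap.congr_fun hc y
    simpa [R, LinearMap.sum_apply, mul_assoc] using this
  let e : (Fin (Module.finrank F E) → E) ≃ₗ[E] (E →ₗ[F] E) := b.constr E
  have hfin : Module.Finite E (E →ₗ[F] E) := Module.Finite.equiv e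
  have hrank : Module.finrank E (E →ₗ[F] E) = Module.finrank F E := by
    rw [← e.finrank_eq, Module.finrank_fintype_fun_eq_card, Fintype.card_fin]
  have hspan := hR.span_eq_top_of_card_eq_finrank' (by rw [hrank, Fintype.card_fin])
  let σ' : E →ₗ[F] E :=
    { toFun := σ
      map_add' := map_add σ
      map_smul' := fun c y => by
        simp only [Subring.smul_def, smul_eq_mul, map_mul, hσ c c.2, RingHom.id_apply] }
  have hmem : σ' ∈ Submodule.span E (Set.range R) := by rw [hspan]; trivial
  obtain ⟨a, ha⟩ := (Submodule.mem_span_range_iff_exists_fun E).mp hmem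
  have ha' : ∀ y, σ y = ∑ i, a i * y * b i := by
    intro y
    have := LinearMap.congr_fun ha y
    simpa [R, σ', LinearMap.sum_apply, mul_assoc] using this.symm
  have key : ∀ x i, σ x * a i = a i * x := by
    intro x i
    have := mul_mul_independent b b.linearIndependent Finset.univ
      (fun i => σ x * a i - a i * x) (fun y => by
        have h1 := ha' (x * y)
        rw [map_mul, ha' y, Finset.mul_sum] at h1
        rw [← sub_eq_zero, ← Finset.sum_sub_distrib] at h1
        rw [← h1]
        refine Finset.sum_congr rfl fun i _ => ?_
        simp only [sub_mul, mul_assoc]) i (Finset.mem_univ _)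
    exact sub_eq_zero.mp this
  by_contra hcon
  push Not at hcon
  have hz : ∀ i, a i = 0 := by
    intro i
    by_contra hne
    obtain ⟨x, hx⟩ := hcon (a i) hne
    exact hx (key x i)
  have := ha' 1
  simp [hz] at this

/-! ### Gradings -/

/-- A `G`-grading of the `𝕜`-algebra `D`, given by its system of projections: `pr g x` is the
component of `x` of degree `g`. Components are allowed to vanish, and products satisfy only
`D_g * D_h ⊆ D_{gh}`. -/
structure Grd (𝕜 G D : Type*) [Field 𝕜] [Group G] [Fintype G] [Ring D] [Algebra 𝕜 D] where
  pr : G → D →ₗ[𝕜] D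
  sum_pr : ∀ x, ∑ g, pr g x = x
  pr_same : ∀ g x, pr g (pr g x) = pr g x
  pr_ne : ∀ g h x, g ≠ h → pr g (pr h x) = 0
  pr_mul : ∀ g h x y, pr (g * h) (pr g x * pr h y) = pr g x * pr h y

namespace Grd

section Ring

variable {𝕜 G D : Type*} [Field 𝕜] [Group G] [Fintype G] [Ring D] [Algebra 𝕜 D]
  (𝒢 : Grd 𝕜 G D)

/-- The homogeneous component of degree `g`. -/
def comp (g : G) : Submodule 𝕜 D := LinearMap.range (𝒢.pr g)

variable {𝒢}

theorem mem_comp {g : G} {x : D} : x ∈ 𝒢.comp g ↔ 𝒢.pr g x = x :=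
  ⟨fun ⟨y, hy⟩ => by rw [← hy, 𝒢.pr_same], fun h => ⟨x, h⟩⟩

theorem pr_mem (g : G) (x : D) : 𝒢.pr g x ∈ 𝒢.comp g := ⟨x, rfl⟩

theorem pr_of_ne {g h : G} {x : D} (hx : x ∈ 𝒢.comp g) (hne : h ≠ g) : 𝒢.pr h x = 0 := by
  rw [← mem_comp.mp hx, 𝒢.pr_ne h g x hne]

theorem mul_mem {g h : G} {x y : D} (hx : x ∈ 𝒢.comp g) (hy : y ∈ 𝒢.comp h) :
    x * y ∈ 𝒢.comp (g * h) := by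
  rw [mem_comp, ← mem_comp.mp hx, ← mem_comp.mp hy, 𝒢.pr_mul]

theorem mem_of_pr_ne {g : G} {x : D} (h : ∀ k, k ≠ g → 𝒢.pr k x = 0) : x ∈ 𝒢.comp g := by
  rw [mem_comp]
  conv_rhs => rw [← 𝒢.sum_pr x]
  rw [Finset.sum_eq_single g (fun k _ hk => h k hk) (by simp)]

theorem ext_pr {x y : D} (h : ∀ g, 𝒢.pr g x = 𝒢.pr g y) : x = y := by
  rw [← 𝒢.sum_pr x, ← 𝒢.sum_pr y]
  exact Finset.sum_congr rfl fun g _ => h g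

theorem pr_mul_right {h : G} {y : D} (hy : y ∈ 𝒢.comp h) (g : G) (x : D) :
    𝒢.pr g (x * y) = 𝒢.pr (g * h⁻¹) x * y := by
  conv_lhs => rw [← 𝒢.sum_pr x, Finset.sum_mul, map_sum]
  rw [Finset.sum_eq_single (g * h⁻¹)]
  · have := mem_comp.mp (mul_mem (𝒢.pr_mem (g * h⁻¹) x) hy)
    rwa [inv_mul_cancel_right] at this
  · intro k _ hk
    refine pr_of_ne (mul_mem (𝒢.pr_mem k x) hy) ?_
    rintro rfl
    exact hk (by rw [mul_inv_cancel_right])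
  · simp

theorem pr_mul_left {h : G} {x : D} (hx : x ∈ 𝒢.comp h) (g : G) (y : D) :
    𝒢.pr g (x * y) = x * 𝒢.pr (h⁻¹ * g) y := by
  conv_lhs => rw [← 𝒢.sum_pr y, Finset.mul_sum, map_sum]
  rw [Finset.sum_eq_single (h⁻¹ * g)]
  · have := mem_comp.mp (mul_mem hx (𝒢.pr_mem (h⁻¹ * g) y))
    rwa [mul_inv_cancel_left] at this
  · intro k _ hk
    refine pr_of_ne (mul_mem hx (𝒢.pr_mem k y)) ?_
    rintro rfl
    exact hk (by rw [inv_mul_cancel_left])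
  · simp

variable (𝒢) in
theorem one_mem : (1 : D) ∈ 𝒢.comp 1 := by
  have key : ∀ x, 𝒢.pr 1 1 * x = x := by
    intro x
    refine 𝒢.ext_pr fun g => ?_
    have h1 := pr_mul_left (𝒢.pr_mem 1 1) g x
    rw [inv_one, one_mul] at h1
    rw [h1]
    have h2 := pr_mul_right (𝒢.pr_mem g x) g 1
    rw [one_mul, mul_inv_cancel, 𝒢.pr_same] at h2
    exact h2.symm
  rw [mem_comp]
  simpa using key 1

theorem inv_mem_of_mul_eq_one {g : G} {x y : D} (hx : x ∈ 𝒢.comp g) (hxy : x * y = 1)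
    (hyx : y * x = 1) : y ∈ 𝒢.comp g⁻¹ := by
  have h1 := pr_mul_left hx 1 y
  rw [hxy, mem_comp.mp 𝒢.one_mem, mul_one] at h1
  have : y = 𝒢.pr g⁻¹ y := by
    calc y = y * 1 := (mul_one y).symm
    _ = _ := by rw [h1, ← mul_assoc, hyx, one_mul]
  rw [mem_comp, ← this]

theorem algebraMap_mem (a : 𝕜) : algebraMap 𝕜 D a ∈ 𝒢.comp 1 := by
  rw [Algebra.algebraMap_eq_smul_one]
  exact Submodule.smul_mem _ _ 𝒢.one_mem

theorem eq_of_mem_of_mem {g h : G} {x : D} (hg : x ∈ 𝒢.comp g) (hh : x ∈ 𝒢.comp h)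
    (hx : x ≠ 0) : g = h := by
  by_contra hne
  exact hx (by rw [← mem_comp.mp hg, pr_of_ne hh hne])

variable (𝒢) in
/-- The subring of elements whose components all have degree in the subgroup `P`. -/
def sub (P : Subgroup G) : Subring D where
  carrier := {x | ∀ g, g ∉ P → 𝒢.pr g x = 0}
  zero_mem' := by simp
  one_mem' := fun g hg => pr_of_ne 𝒢.one_mem (by rintro rfl; exact hg P.one_mem)
  add_mem' := fun {x y} hx hy g hg => by rw [map_add, hx g hg, hy g hg, add_zero]
  neg_mem' := fun {x} hx g hg => by rw [map_neg, hx g hg, neg_zero]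
  mul_mem' := fun {x y} hx hy g hg => by
    rw [← 𝒢.sum_pr x, Finset.sum_mul, map_sum]
    refine Finset.sum_eq_zero fun k _ => ?_
    rw [pr_mul_left (𝒢.pr_mem k x)]
    by_cases hk : k ∈ P
    · rw [hy _ (fun h => hg (by simpa using P.mul_mem hk h)), mul_zero]
    · rw [hx k hk, zero_mul]

theorem mem_sub {P : Subgroup G} {x : D} : x ∈ 𝒢.sub P ↔ ∀ g, g ∉ P → 𝒢.pr g x = 0 := Iff.rfl

theorem comp_le_sub {P : Subgroup G} {g : G} (hg : g ∈ P) {x : D} (hx : x ∈ 𝒢.comp g) :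
    x ∈ 𝒢.sub P := fun h hh => pr_of_ne hx (by rintro rfl; exact hh hg)

theorem mem_sub_bot {x : D} : x ∈ 𝒢.sub ⊥ ↔ x ∈ 𝒢.comp 1 :=
  ⟨fun h => mem_of_pr_ne fun k hk => h k (by simpa using hk), comp_le_sub (Subgroup.one_mem _)⟩

variable (𝒢) in
open scoped Classical in
/-- The `Q`-grading obtained from a `G`-grading by pushing degrees forward along `f : G → Q`. -/
noncomputable def coarsen {Q : Type*} [Group Q] [Fintype Q] (f : G →* Q) : Grd 𝕜 Q D where
  pr q := ∑ g with f g = q, 𝒢.pr g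
  sum_pr x := by
    conv_rhs => rw [← 𝒢.sum_pr x]
    simp only [LinearMap.sum_apply]
    exact Finset.sum_fiberwise _ _ _
  pr_same q x := by
    simp only [LinearMap.sum_apply, map_sum]
    refine Finset.sum_congr rfl fun g hg => ?_
    rw [Finset.sum_eq_single g (fun k _ hk => 𝒢.pr_ne _ _ _ hk)
      (fun h => absurd hg h), 𝒢.pr_same]
  pr_ne q r x hqr := by
    simp only [LinearMap.sum_apply, map_sum]
    refine Finset.sum_eq_zero fun g hg => Finset.sum_eq_zero fun k hk => 𝒢.pr_ne _ _ _ ?_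
    rintro rfl
    simp only [Finset.mem_filter, Finset.mem_univ, true_and] at hg hk
    exact hqr (hk.symm.trans hg)
  pr_mul q r x y := by
    simp only [LinearMap.sum_apply _ _ x, LinearMap.sum_apply _ _ y, Finset.sum_mul_sum]
    rw [map_sum]
    refine Finset.sum_congr rfl fun g hg => ?_
    rw [map_sum]
    refine Finset.sum_congr rfl fun h hh => ?_
    simp only [Finset.mem_filter, Finset.mem_univ, true_and] at hg hh
    rw [LinearMap.sum_apply, Finset.sum_eq_single (g * h), 𝒢.pr_mul]
    · exact fun k _ hk => pr_of_ne (mul_mem (𝒢.pr_mem g x) (𝒢.pr_mem h y)) hk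
    · intro hn
      simp [hg, hh] at hn

theorem mem_coarsen {Q : Type*} [Group Q] [Fintype Q] {f : G →* Q} {q : Q} {x : D} :
    x ∈ (𝒢.coarsen f).comp q ↔ ∀ g, f g ≠ q → 𝒢.pr g x = 0 := by
  classical
  rw [mem_comp]
  simp only [coarsen, LinearMap.sum_apply]
  constructor
  · intro h g hg
    rw [← h, map_sum]
    refine Finset.sum_eq_zero fun k hk => 𝒢.pr_ne _ _ _ ?_
    rintro rfl
    simp at hk
    exact hg hk
  · intro h
    conv_rhs => rw [← 𝒢.sum_pr x]
    rw [Finset.sum_filter]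
    refine Finset.sum_congr rfl fun g _ => ?_
    split_ifs with hg
    · rfl
    · exact (h g hg).symm

theorem mem_coarsen_one {N : Subgroup G} [N.Normal] [Fintype (G ⧸ N)] {x : D} :
    x ∈ (𝒢.coarsen (QuotientGroup.mk' N)).comp 1 ↔ x ∈ 𝒢.sub N := by
  rw [mem_coarsen, mem_sub]
  simp [QuotientGroup.eq_one_iff]

variable (𝒢) in
theorem iSupIndep_comp : iSupIndep 𝒢.comp := by
  rw [iSupIndep_def]
  intro g
  have hle : (⨆ (j) (_ : j ≠ g), 𝒢.comp j) ≤ LinearMap.ker (𝒢.pr g) :=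
    iSup₂_le fun j hj x hx => LinearMap.mem_ker.mpr (pr_of_ne hx hj.symm)
  rw [Submodule.disjoint_def]
  intro x hx hx'
  rw [← mem_comp.mp hx, LinearMap.mem_ker.mp (hle hx')]

variable (𝒢) in
theorem iSup_comp : (⨆ g, 𝒢.comp g) = ⊤ := by
  rw [eq_top_iff]
  intro x _
  rw [← 𝒢.sum_pr x]
  exact Submodule.sum_mem _ fun g _ => Submodule.mem_iSup_of_mem g (𝒢.pr_mem g x)

end Ring

/-- Submodules forming a multiplicative direct sum decomposition are the components of a `Grd`. -/
theorem exists_of_submodules {𝕜 G D : Type*} [Field 𝕜] [Group G] [Fintype G] [Ring D]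
    [Algebra 𝕜 D] (Dg : G → Submodule 𝕜 D) (hi : iSupIndep Dg) (ht : (⨆ g, Dg g) = ⊤)
    (hm : ∀ g h x y, x ∈ Dg g → y ∈ Dg h → x * y ∈ Dg (g * h)) :
    ∃ 𝒢 : Grd 𝕜 G D, ∀ g, 𝒢.comp g = Dg g := by
  classical
  have hinteg := DirectSum.isInternal_submodule_of_iSupIndep_of_iSup_eq_top hi ht
  let := hinteg.chooseDecomposition
  have hsame : ∀ g x, x ∈ Dg g → ((DirectSum.decompose Dg x g : Dg g) : D) = x :=
    fun g x hx => DirectSum.decompose_of_mem_same Dg hx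
  refine ⟨{
    pr := fun g =>
      { toFun := fun x => (DirectSum.decompose Dg x g : Dg g)
        map_add' := fun x y => by simp
        map_smul' := fun c x => by rw [DirectSum.decompose_smul, DirectSum.smul_apply]; rfl }
    sum_pr := fun x => ?_
    pr_same := fun g x => hsame g _ (SetLike.coe_mem _)
    pr_ne := fun g h x hgh => DirectSum.decompose_of_mem_ne Dg (SetLike.coe_mem _) hgh.symm
    pr_mul := fun g h x y => hsame _ _ (hm g h _ _ (SetLike.coe_mem _) (SetLike.coe_mem _)) }, ?_⟩
  · conv_rhs => rw [← DirectSum.sum_support_decompose Dg x]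
    symm
    refine Finset.sum_subset (Finset.subset_univ _) fun g _ hg => ?_
    simpa using hg
  · intro g
    ext x
    rw [mem_comp]
    exact ⟨fun h => by rw [← h]; exact SetLike.coe_mem _, hsame g x⟩

end Grd

/-! ### The dimension of a graded division ring over its center -/

namespace Grd

section DimensionFormula

variable {𝕜 Q D : Type*} [Field 𝕜] [Group Q] [Fintype Q] [DivisionRing D] [Algebra 𝕜 D]

theorem inv_mem {𝒬 : Grd 𝕜 Q D} {q : Q} {x : D} (hx : x ∈ 𝒬.comp q) : x⁻¹ ∈ 𝒬.comp q⁻¹ := by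
  by_cases h : x = 0
  · subst h; simp
  · exact inv_mem_of_mul_eq_one hx (mul_inv_cancel₀ h) (inv_mul_cancel₀ h)

/-- The component of degree `1` (the unit component) of a graded division ring, as a division
subring. Despite its name, `Subfield` covers noncommutative division subrings. -/
def unitComp (𝒬 : Grd 𝕜 Q D) : Subfield D where
  carrier := 𝒬.comp 1
  mul_mem' hx hy := by simpa using mul_mem hx hy
  one_mem' := 𝒬.one_mem
  add_mem' hx hy := (𝒬.comp 1).add_mem hx hy
  zero_mem' := (𝒬.comp 1).zero_mem
  neg_mem' hx := (𝒬.comp 1).neg_mem hx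
  inv_mem' x hx := by simpa using inv_mem hx

theorem mem_unitComp {𝒬 : Grd 𝕜 Q D} {x : D} : x ∈ 𝒬.unitComp ↔ x ∈ 𝒬.comp 1 := Iff.rfl

theorem conj_mem {𝒬 : Grd 𝕜 Q D} {q : Q} {x y : D} (hx : x ∈ 𝒬.comp q) (hy : y ∈ 𝒬.comp 1) :
    x * y * x⁻¹ ∈ 𝒬.comp 1 := by
  simpa using mul_mem (mul_mem hx hy) (inv_mem hx)

/-- `l` lies in the center of the unit component. -/
def IsCen (𝒬 : Grd 𝕜 Q D) (l : D) : Prop := l ∈ 𝒬.comp 1 ∧ ∀ t ∈ 𝒬.comp 1, t * l = l * t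

theorem isCen_center {𝒬 : Grd 𝕜 Q D} (l : Subring.center 𝒬.unitComp) :
    𝒬.IsCen ((l : 𝒬.unitComp) : D) :=
  ⟨l.1.2, fun t ht => congrArg Subtype.val (Subring.mem_center_iff.mp l.2 ⟨t, ht⟩)⟩

theorem IsCen.conj {𝒬 : Grd 𝕜 Q D} {l : D} (hl : 𝒬.IsCen l) {q : Q} {x : D}
    (hx : x ∈ 𝒬.comp q) : 𝒬.IsCen (x * l * x⁻¹) := by
  refine ⟨conj_mem hx hl.1, fun t ht => ?_⟩
  by_cases h0 : x = 0
  · simp [h0]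
  have h1 : x⁻¹ * t * x ∈ 𝒬.comp 1 := by
    simpa using conj_mem (inv_mem hx) ht
  have h2 := hl.2 _ h1
  calc t * (x * l * x⁻¹) = x * ((x⁻¹ * t * x) * l) * x⁻¹ := by
        simp only [← mul_assoc, mul_inv_cancel₀ h0, one_mul]
    _ = x * l * x⁻¹ * t := by
        rw [h2]; simp only [mul_assoc, mul_inv_cancel₀ h0, mul_one]

/-- The conjugate of a central element `l` of the unit component by a nonzero homogeneous element
depends only on the degree of the latter. -/
theorem IsCen.conj_eq {𝒬 : Grd 𝕜 Q D} {l : D} (hl : 𝒬.IsCen l) {q : Q} {x y : D}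
    (hx : x ∈ 𝒬.comp q) (hy : y ∈ 𝒬.comp q) (hx0 : x ≠ 0) (hy0 : y ≠ 0) :
    x * l * x⁻¹ = y * l * y⁻¹ := by
  have h1 : y⁻¹ * x ∈ 𝒬.comp 1 := by simpa using mul_mem (inv_mem hy) hx
  have h2 := hl.2 _ h1
  calc x * l * x⁻¹ = y * ((y⁻¹ * x) * l) * x⁻¹ := by
        simp only [← mul_assoc, mul_inv_cancel₀ hy0, one_mul]
    _ = _ := by rw [h2]; simp only [mul_assoc, mul_inv_cancel₀ hx0, mul_one]

/-- The element of the center of the unit component with a given underlying element. -/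
def mkCen {𝒬 : Grd 𝕜 Q D} {l : D} (hl : 𝒬.IsCen l) : Subring.center 𝒬.unitComp :=
  ⟨⟨l, hl.1⟩, Subring.mem_center_iff.mpr fun t => Subtype.ext (hl.2 t.1 t.2)⟩

theorem cen_ext {𝒬 : Grd 𝕜 Q D} {l m : Subring.center 𝒬.unitComp}
    (h : ((l : 𝒬.unitComp) : D) = ((m : 𝒬.unitComp) : D)) : l = m :=
  Subtype.ext (Subtype.ext h)

/-- The action of the grading group on the center of the unit component, `q` acting through
conjugation by a chosen nonzero element `u q` of degree `q`. -/
@[reducible] def cenAction (𝒬 : Grd 𝕜 Q D) (u : Q → D) (hu : ∀ q, u q ∈ 𝒬.comp q)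
    (hu0 : ∀ q, u q ≠ 0) : MulSemiringAction Q (Subring.center 𝒬.unitComp) where
  smul q l := mkCen ((isCen_center l).conj (hu q))
  one_smul l := cen_ext (by
    change u 1 * _ * (u 1)⁻¹ = _
    rw [(isCen_center l).2 _ (hu 1), mul_inv_cancel_right₀ (hu0 1)])
  mul_smul q r l := cen_ext (by
    change u (q * r) * _ * (u (q * r))⁻¹ = u q * (u r * _ * (u r)⁻¹) * (u q)⁻¹
    rw [(isCen_center l).conj_eq (hu (q * r)) (mul_mem (hu q) (hu r)) (hu0 _)
      (mul_ne_zero (hu0 _) (hu0 _)), mul_inv_rev]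
    simp only [mul_assoc])
  smul_zero q := cen_ext (by change u q * 0 * (u q)⁻¹ = 0; simp)
  smul_add q l m := cen_ext (by
    change u q * (_ + _) * (u q)⁻¹ = u q * _ * (u q)⁻¹ + u q * _ * (u q)⁻¹
    rw [mul_add, add_mul])
  smul_one q := cen_ext (by change u q * 1 * (u q)⁻¹ = 1; simp [hu0 q])
  smul_mul q l m := cen_ext (by
    change u q * (_ * _) * (u q)⁻¹ = (u q * _ * (u q)⁻¹) * (u q * _ * (u q)⁻¹)
    simp only [mul_assoc, inv_mul_cancel_left₀ (hu0 q)])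

/-- The nonzero homogeneous elements `u q` form a basis of `D` over the unit component. -/
theorem finrank_unitComp (𝒬 : Grd 𝕜 Q D) (u : Q → D) (hu : ∀ q, u q ∈ 𝒬.comp q)
    (hu0 : ∀ q, u q ≠ 0) : Module.finrank 𝒬.unitComp D = Fintype.card Q := by
  let e : D ≃ₗ[𝒬.unitComp] (Q → 𝒬.unitComp) :=
    { toFun := fun x q => ⟨𝒬.pr q x * (u q)⁻¹, by
        simpa [mem_unitComp] using mul_mem (𝒬.pr_mem q x) (inv_mem (hu q))⟩
      invFun := fun c => ∑ q, (c q : D) * u q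
      map_add' := fun x y => by
        ext q; simp [add_mul]
      map_smul' := fun t x => by
        ext q
        change 𝒬.pr q ((t : D) * x) * (u q)⁻¹ = (t : D) * (𝒬.pr q x * (u q)⁻¹)
        rw [pr_mul_left (h := 1) t.2]
        simp [mul_assoc]
      left_inv := fun x => by
        simp only [inv_mul_cancel_right₀ (hu0 _)]
        exact 𝒬.sum_pr x
      right_inv := fun c => by
        ext q
        simp only [map_sum]
        rw [Finset.sum_eq_single q]
        · have : (c q : D) * u q ∈ 𝒬.comp q := by simpa using mul_mem (c q).2 (hu q)
          rw [mem_comp.mp this, mul_inv_cancel_right₀ (hu0 q)]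
        · intro r _ hr
          have : (c r : D) * u r ∈ 𝒬.comp r := by simpa using mul_mem (c r).2 (hu r)
          exact pr_of_ne this hr.symm
        · simp }
  rw [e.finrank_eq, Module.finrank_fintype_fun_eq_card]

/-- If every nontrivial degree acts nontrivially by conjugation on the center `L` of the unit
component `T`, then the center of `D` is the fixed field of `Q` in `L`, and Galois theory
computes `dim_{Z(D)} D`. -/
theorem finrank_center (𝒬 : Grd 𝕜 Q D) (hne : ∀ q, 𝒬.comp q ≠ ⊥)
    (hact : ∀ q, (∀ x ∈ 𝒬.comp q, ∀ l, 𝒬.IsCen l → x * l = l * x) → q = 1) :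
    Module.finrank (Subring.center D) D =
      Fintype.card Q ^ 2 * Module.finrank (Subring.center 𝒬.unitComp) 𝒬.unitComp := by
  have hex : ∀ q, ∃ x ∈ 𝒬.comp q, x ≠ 0 := fun q => Submodule.exists_mem_ne_zero_of_ne_bot (hne q)
  choose u hu hu0 using hex
  let _ := cenAction 𝒬 u hu hu0
  have smul_val : ∀ (q : Q) (l : Subring.center 𝒬.unitComp),
      (((q • l : Subring.center 𝒬.unitComp) : 𝒬.unitComp) : D) =
        u q * ((l : 𝒬.unitComp) : D) * (u q)⁻¹ := fun q l => rfl
  have comm_of : ∀ q l, 𝒬.IsCen l → u q * l * (u q)⁻¹ = l → ∀ x ∈ 𝒬.comp q, x * l = l * x := by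
    intro q l hl h x hx
    by_cases hx0 : x = 0
    · simp [hx0]
    rw [hl.conj_eq (hu q) hx (hu0 q) hx0] at h
    rw [← eq_mul_inv_iff_mul_eq₀ (inv_ne_zero hx0), inv_inv] at h
    exact h
  have hfaith : FaithfulSMul Q (Subring.center 𝒬.unitComp) := by
    refine ⟨fun {q r} h => ?_⟩
    have : r⁻¹ * q = 1 := by
      refine hact _ fun x hx l hl => comm_of _ l hl ?_ x hx
      have h1 : (r⁻¹ * q) • mkCen hl = mkCen hl := by
        rw [mul_smul, h, inv_smul_smul]
      exact congrArg (fun l : Subring.center 𝒬.unitComp => ((l : 𝒬.unitComp) : D)) h1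
    rw [inv_mul_eq_one] at this
    exact this.symm
  have hZ : ∀ z ∈ Subring.center D, 𝒬.IsCen z := by
    intro z hz
    rw [Subring.mem_center_iff] at hz
    refine ⟨mem_of_pr_ne fun q hq => ?_, fun t _ => hz t⟩
    by_contra h0
    refine hq (hact q fun x hx l hl => ?_)
    refine comm_of q l hl ?_ x hx
    rw [hl.conj_eq (hu q) (𝒬.pr_mem q z) (hu0 q) h0]
    have h1 : 𝒬.pr q (z * l) = 𝒬.pr q (l * z) := by rw [hz l]
    rw [pr_mul_right hl.1, pr_mul_left hl.1] at h1
    simp only [inv_one, mul_one, one_mul] at h1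
    rw [h1, mul_inv_cancel_right₀ h0]
  let i : Subring.center D → FixedPoints.subfield Q (Subring.center 𝒬.unitComp) := fun z =>
    ⟨mkCen (hZ z z.2), fun q => cen_ext (by
      rw [smul_val]
      change u q * (z : D) * (u q)⁻¹ = z
      rw [Subring.mem_center_iff.mp z.2, mul_inv_cancel_right₀ (hu0 q)])⟩
  have hi : Function.Bijective i := by
    constructor
    · intro z w h
      exact Subtype.ext (congrArg (fun l : FixedPoints.subfield Q (Subring.center 𝒬.unitComp) =>
        ((l : Subring.center 𝒬.unitComp) : 𝒬.unitComp).1) h)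
    · rintro ⟨l, hl⟩
      have hc : ((l : 𝒬.unitComp) : D) ∈ Subring.center D := by
        rw [Subring.mem_center_iff]
        intro x
        rw [← 𝒬.sum_pr x, Finset.sum_mul, Finset.mul_sum]
        refine Finset.sum_congr rfl fun q _ => ?_
        refine comm_of q _ (isCen_center l) ?_ _ (𝒬.pr_mem q x)
        rw [← smul_val]
        exact congrArg (fun l : Subring.center 𝒬.unitComp => ((l : 𝒬.unitComp) : D)) (hl q)
      exact ⟨⟨_, hc⟩, rfl⟩
  have h1 : Module.finrank (Subring.center D) D =
      Module.finrank (FixedPoints.subfield Q (Subring.center 𝒬.unitComp)) D := by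
    unfold Module.finrank
    congr 1
    exact rank_eq_of_equiv_equiv i (AddEquiv.refl D) hi (fun r m => rfl)
  rw [h1, ← Module.finrank_mul_finrank (FixedPoints.subfield Q (Subring.center 𝒬.unitComp))
    (Subring.center 𝒬.unitComp) D, FixedPoints.finrank_eq_card,
    ← Module.finrank_mul_finrank (Subring.center 𝒬.unitComp) 𝒬.unitComp D,
    finrank_unitComp 𝒬 u hu hu0]
  ring

end DimensionFormula

end Grd

/-! ### The inertia group of a graded division ring -/

open scoped commutatorElement

/-- Commutators are torsion in a group `H` that is a central extension of a subgroup of a finite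
group. There are finitely many commutators, since `⁅a, b⁆` depends only on `f a` and `f b`, so
the commutator subgroup is finite by Schur's theorem. -/
theorem isOfFinOrder_commutatorElement {H G : Type*} [Group H] [Group G] [Finite G] (f : H →* G)
    (hf : ∀ z, f z = 1 → ∀ a, a * z = z * a) (a b : H) : IsOfFinOrder ⁅a, b⁆ := by
  have hs : ∀ a, f (Function.invFun f (f a)) = f a := fun a => Function.invFun_eq ⟨a, rfl⟩
  have hz : ∀ a, ∃ z, (∀ b, b * z = z * b) ∧ Function.invFun f (f a) = a * z := fun a =>
    ⟨a⁻¹ * Function.invFun f (f a), hf _ (by rw [map_mul, hs, map_inv, inv_mul_cancel]),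
      by rw [mul_inv_cancel_left]⟩
  have hfin : Finite (commutatorSet H) := by
    refine Set.Finite.subset (Set.finite_range fun q : G × G =>
      ⁅Function.invFun f q.1, Function.invFun f q.2⁆) ?_
    rintro _ ⟨a, b, rfl⟩
    refine ⟨(f a, f b), ?_⟩
    obtain ⟨z, hz1, hz2⟩ := hz a
    obtain ⟨w, hw1, hw2⟩ := hz b
    simp only [hz2, hw2, commutatorElement_def, mul_inv_rev]
    calc a * z * (b * w) * (z⁻¹ * a⁻¹) * (w⁻¹ * b⁻¹)
        = a * (z * (b * w)) * z⁻¹ * a⁻¹ * w⁻¹ * b⁻¹ := by simp only [mul_assoc]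
      _ = a * b * (w * a⁻¹) * w⁻¹ * b⁻¹ := by
          rw [← hz1]; simp only [mul_assoc, mul_inv_cancel_left]
      _ = a * b * a⁻¹ * b⁻¹ := by
          rw [← hw1]; simp only [mul_assoc, mul_inv_cancel_left]
  have hmem : ⁅a, b⁆ ∈ commutator H :=
    Subgroup.commutator_mem_commutator (Subgroup.mem_top a) (Subgroup.mem_top b)
  have h2 : IsOfFinOrder (⟨⁅a, b⁆, hmem⟩ : commutator H) := isOfFinOrder_of_finite _
  exact (Submonoid.isOfFinOrder_coe (x := (⟨⁅a, b⁆, hmem⟩ : (commutator H).toSubmonoid))).mpr h2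

namespace Grd

section Forward

variable {𝕜 G D : Type*} [Field 𝕜] [Group G] [Fintype G] [DivisionRing D] [Algebra 𝕜 D]

/-- The unit component is finite-dimensional over its center: a basis remains
independent over the center of `D`. -/
theorem finite_unitComp (𝒢 : Grd 𝕜 G D) [Module.Finite (Subring.center D) D] :
    Module.Finite (Subring.center 𝒢.unitComp) 𝒢.unitComp := by
  let b := Module.Basis.ofVectorSpace (Subring.center 𝒢.unitComp) 𝒢.unitComp
  have hli : LinearIndependent (Subring.center D) (fun i => (b i : D)) := by
    rw [linearIndependent_iff']
    intro s z hsum j hj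
    by_contra hzj
    have hz : ∃ g, 𝒢.pr g (z j) ≠ 0 := by
      by_contra hcon
      push Not at hcon
      exact hzj (Subtype.ext (ext_pr (𝒢 := 𝒢) fun g => by rw [hcon g]; simp))
    obtain ⟨g, hg⟩ := hz
    have hcomm : ∀ i, ∀ t ∈ 𝒢.comp 1, t * 𝒢.pr g (z i) = 𝒢.pr g (z i) * t := by
      intro i t ht
      have h1 : 𝒢.pr g (t * z i) = 𝒢.pr g (z i * t) := by
        rw [Subring.mem_center_iff.mp (z i).2 t]
      rw [pr_mul_right ht, pr_mul_left ht] at h1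
      simpa using h1
    have hcen : ∀ i, 𝒢.IsCen ((𝒢.pr g (z j))⁻¹ * 𝒢.pr g (z i)) := by
      intro i
      refine ⟨by simpa using mul_mem (inv_mem (𝒢.pr_mem g (z j))) (𝒢.pr_mem g (z i)), ?_⟩
      intro t ht
      have h2 : t * (𝒢.pr g (z j))⁻¹ = (𝒢.pr g (z j))⁻¹ * t := by
        rw [eq_inv_mul_iff_mul_eq₀ hg, ← mul_assoc, ← hcomm j t ht, mul_inv_cancel_right₀ hg]
      rw [← mul_assoc, h2, mul_assoc, hcomm i t ht, mul_assoc]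
    have hrel : ∑ i ∈ s, mkCen (hcen i) • b i = 0 := by
      refine Subtype.ext ?_
      rw [AddSubmonoidClass.coe_finsetSum]
      change ∑ i ∈ s, ((𝒢.pr g (z j))⁻¹ * 𝒢.pr g (z i)) * (b i : D) = 0
      simp only [mul_assoc]
      rw [← Finset.mul_sum]
      have h3 := congrArg (𝒢.pr g) hsum
      rw [map_sum, map_zero] at h3
      rw [mul_eq_zero]
      right
      rw [← h3]
      refine Finset.sum_congr rfl fun i _ => ?_
      change _ = 𝒢.pr g ((z i : D) * (b i : D))
      rw [pr_mul_right (b i).2]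
      simp
    have h4 := linearIndependent_iff'.mp b.linearIndependent s _ hrel j hj
    have h5 : (𝒢.pr g (z j))⁻¹ * 𝒢.pr g (z j) = 0 :=
      congrArg (fun l : Subring.center 𝒢.unitComp => ((l : 𝒢.unitComp) : D)) h4
    rw [inv_mul_cancel₀ hg] at h5
    exact one_ne_zero h5
  have := hli.finite_of_isNoetherian
  exact Module.Finite.of_basis b

/-- The degrees acting trivially, by conjugation, on the center of the unit component. -/
def inertia (𝒢 : Grd 𝕜 G D) (hne : ∀ g, 𝒢.comp g ≠ ⊥) : Subgroup G where
  carrier := {g | ∀ x ∈ 𝒢.comp g, ∀ l, 𝒢.IsCen l → x * l = l * x}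
  one_mem' x hx l hl := hl.2 x hx
  mul_mem' {g h} hg hh x hx l hl := by
    obtain ⟨u, hu, hu0⟩ := Submodule.exists_mem_ne_zero_of_ne_bot (hne h)
    have h1 : x * u⁻¹ ∈ 𝒢.comp g := by simpa using mul_mem hx (inv_mem hu)
    have h2 := hg _ h1 l hl
    have h3 := hh _ hu l hl
    calc x * l = x * u⁻¹ * (u * l) := by
          rw [mul_assoc, inv_mul_cancel_left₀ hu0]
      _ = (x * u⁻¹ * l) * u := by rw [h3]; simp only [mul_assoc]
      _ = l * x := by rw [h2]; simp only [mul_assoc, inv_mul_cancel₀ hu0, mul_one]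
  inv_mem' {g} hg x hx l hl := by
    by_cases hx0 : x = 0
    · simp [hx0]
    have h1 := hg x⁻¹ (by simpa using inv_mem hx) l hl
    calc x * l = x * (l * x⁻¹) * x := by
          simp only [mul_assoc, inv_mul_cancel₀ hx0, mul_one]
      _ = l * x := by rw [← h1, mul_inv_cancel_left₀ hx0]

theorem mem_inertia {𝒢 : Grd 𝕜 G D} {hne : ∀ g, 𝒢.comp g ≠ ⊥} {g : G} :
    g ∈ 𝒢.inertia hne ↔ ∀ x ∈ 𝒢.comp g, ∀ l, 𝒢.IsCen l → x * l = l * x := Iff.rfl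

theorem inertia_normal (𝒢 : Grd 𝕜 G D) (hne : ∀ g, 𝒢.comp g ≠ ⊥) : (𝒢.inertia hne).Normal := by
  refine ⟨fun n hn h x hx l hl => ?_⟩
  obtain ⟨u, hu, hu0⟩ := Submodule.exists_mem_ne_zero_of_ne_bot (hne h)
  have h1 : u⁻¹ * x * u ∈ 𝒢.comp n := by
    simpa [mul_assoc] using mul_mem (mul_mem (inv_mem hu) hx) hu
  have h2 := hn _ h1 _ (hl.conj (inv_mem hu))
  rw [inv_inv] at h2
  have h3 := congrArg (fun y => u * y * u⁻¹) h2
  simpa only [mul_assoc, mul_inv_cancel_left₀ hu0, mul_inv_cancel₀ hu0, mul_one] using h3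

/-- By Skolem–Noether, every degree in the inertia group contains a nonzero element
commuting with the whole unit component. -/
theorem exists_commuting (𝒢 : Grd 𝕜 G D) [Module.Finite (Subring.center D) D]
    (hne : ∀ g, 𝒢.comp g ≠ ⊥) {g : G} (hg : g ∈ 𝒢.inertia hne) :
    ∃ v ∈ 𝒢.comp g, v ≠ 0 ∧ ∀ t ∈ 𝒢.comp 1, t * v = v * t := by
  obtain ⟨u, hu, hu0⟩ := Submodule.exists_mem_ne_zero_of_ne_bot (hne g)
  have := 𝒢.finite_unitComp
  let σ : 𝒢.unitComp →+* 𝒢.unitComp :=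
    { toFun := fun t => ⟨u * t * u⁻¹, conj_mem hu t.2⟩
      map_one' := Subtype.ext (by simp [hu0])
      map_zero' := Subtype.ext (by simp)
      map_add' := fun s t => Subtype.ext (by simp [mul_add, add_mul])
      map_mul' := fun s t => Subtype.ext (by
        simp [mul_assoc, inv_mul_cancel_left₀ hu0]) }
  obtain ⟨w, hw0, hw⟩ := skolem_noether_divisionRing σ (fun z hz => Subtype.ext (by
    change u * (z : D) * u⁻¹ = z
    rw [hg u hu z (isCen_center ⟨z, hz⟩), mul_inv_cancel_right₀ hu0]))
  have hw0' : (w : D) ≠ 0 := fun h => hw0 (Subtype.ext h)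
  refine ⟨(w : D)⁻¹ * u, by simpa using mul_mem (inv_mem w.2) hu,
    mul_ne_zero (inv_ne_zero hw0') hu0, fun t ht => ?_⟩
  have h1 : u * t * u⁻¹ * w = w * t := congrArg Subtype.val (hw ⟨t, ht⟩)
  calc t * ((w : D)⁻¹ * u) = (w : D)⁻¹ * (w * t) * (w : D)⁻¹ * u := by
        rw [inv_mul_cancel_left₀ hw0', mul_assoc]
    _ = (w : D)⁻¹ * u * t := by
        rw [← h1]
        simp only [mul_assoc, mul_inv_cancel_left₀ hw0', inv_mul_cancel₀ hu0, mul_one]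

/-- Pairs of a unit commuting with the unit component and its degree. -/
def centralizerPairs (𝒢 : Grd 𝕜 G D) : Subgroup (Dˣ × G) where
  carrier := {p | (p.1 : D) ∈ 𝒢.comp p.2 ∧ ∀ t ∈ 𝒢.comp 1, t * p.1 = p.1 * t}
  one_mem' := ⟨𝒢.one_mem, fun t _ => by simp⟩
  mul_mem' {p q} hp hq := ⟨by simpa using mul_mem hp.1 hq.1, fun t ht => by
    simp only [Prod.fst_mul, Units.val_mul]
    rw [← mul_assoc, hp.2 t ht, mul_assoc, hq.2 t ht, mul_assoc]⟩
  inv_mem' {p} hp := ⟨by simpa using inv_mem hp.1, fun t ht => by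
    have h := hp.2 t ht
    simp only [Prod.fst_inv]
    rw [Units.eq_inv_mul_iff_mul_eq, ← mul_assoc, ← h, Units.mul_inv_cancel_right]⟩

/-- The inertia group is abelian: commutators of lifts are roots of unity, hence lie in `𝕜`. -/
theorem inertia_comm [IsAlgClosed 𝕜] (𝒢 : Grd 𝕜 G D) [Module.Finite (Subring.center D) D]
    (hne : ∀ g, 𝒢.comp g ≠ ⊥) {g h : G} (hg : g ∈ 𝒢.inertia hne) (hh : h ∈ 𝒢.inertia hne) :
    g * h = h * g := by
  obtain ⟨v, hv, hv0, hvc⟩ := 𝒢.exists_commuting hne hg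
  obtain ⟨w, hw, hw0, hwc⟩ := 𝒢.exists_commuting hne hh
  let a : 𝒢.centralizerPairs := ⟨(Units.mk0 v hv0, g), hv, hvc⟩
  let b : 𝒢.centralizerPairs := ⟨(Units.mk0 w hw0, h), hw, hwc⟩
  have hfin := isOfFinOrder_commutatorElement
    ((MonoidHom.snd Dˣ G).comp 𝒢.centralizerPairs.subtype) (fun z hz a => by
      have hz2 : z.1.2 = 1 := hz
      have hz1 := z.2.1
      rw [hz2] at hz1
      refine Subtype.ext (Prod.ext (Units.ext ?_) ?_)
      · exact (a.2.2 _ hz1).symm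
      · simp [hz2]) a b
  obtain ⟨n, hn, hpow⟩ := isOfFinOrder_iff_pow_eq_one.mp hfin
  set c := ⁅a, b⁆ with hc
  have hcD : ((c.1.1 : Dˣ) : D) ^ n = 1 := by
    have := congrArg (fun p : 𝒢.centralizerPairs => ((p.1.1 : Dˣ) : D)) hpow
    simpa using this
  have hinteg : IsIntegral 𝕜 ((c.1.1 : Dˣ) : D) :=
    IsIntegral.of_pow hn (by rw [hcD]; exact isIntegral_one)
  have hdeg := IsAlgClosed.degree_eq_one_of_irreducible 𝕜 (minpoly.irreducible hinteg)
  obtain ⟨ζ, hζ⟩ := minpoly.mem_range_of_degree_eq_one 𝕜 _ hdeg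
  have h1 : ((c.1.1 : Dˣ) : D) ∈ 𝒢.comp 1 := by rw [← hζ]; exact algebraMap_mem ζ
  have h2 := eq_of_mem_of_mem c.2.1 h1 c.1.1.ne_zero
  have h3 : c.1.2 = ⁅g, h⁆ := rfl
  rw [h3] at h2
  exact commutatorElement_eq_one_iff_mul_comm.mp h2

/-- The inertia group has index dividing `d`: for the grading by its quotient, the center of the
unit component is acted on faithfully, and `finrank_center` makes the square of the index
divide `d ^ 2`. -/
theorem exists_normal_abelian [IsAlgClosed 𝕜] (𝒢 : Grd 𝕜 G D) (hne : ∀ g, 𝒢.comp g ≠ ⊥)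
    {d : ℕ} (hd : 1 ≤ d) (hfr : Module.finrank (Subring.center D) D = d ^ 2) :
    ∃ A : Subgroup G, A.Normal ∧ (∀ a b : A, a * b = b * a) ∧ A.index ∣ d := by
  classical
  have : Module.Finite (Subring.center D) D :=
    Module.finite_of_finrank_pos (by rw [hfr]; positivity)
  have := 𝒢.inertia_normal hne
  refine ⟨𝒢.inertia hne, this, fun a b => Subtype.ext (𝒢.inertia_comm hne a.2 b.2), ?_⟩
  let 𝒬 := 𝒢.coarsen (QuotientGroup.mk' (𝒢.inertia hne))
  have hle : ∀ g x, x ∈ 𝒢.comp g → x ∈ 𝒬.comp (QuotientGroup.mk' (𝒢.inertia hne) g) :=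
    fun g x hx => mem_coarsen.mpr fun h hh => pr_of_ne hx (by rintro rfl; exact hh rfl)
  have hcen : ∀ l, 𝒢.IsCen l → 𝒬.IsCen l := by
    intro l hl
    refine ⟨by simpa using hle 1 l hl.1, fun t ht => ?_⟩
    rw [mem_coarsen_one, mem_sub] at ht
    rw [← 𝒢.sum_pr t, Finset.sum_mul, Finset.mul_sum]
    refine Finset.sum_congr rfl fun g _ => ?_
    by_cases hg : g ∈ 𝒢.inertia hne
    · exact hg _ (𝒢.pr_mem g t) l hl
    · rw [ht g hg]; simp
  have key := 𝒬.finrank_center (fun q => by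
    obtain ⟨g, rfl⟩ := QuotientGroup.mk'_surjective _ q
    obtain ⟨u, hu, hu0⟩ := Submodule.exists_mem_ne_zero_of_ne_bot (hne g)
    exact (Submodule.ne_bot_iff _).mpr ⟨u, hle g u hu, hu0⟩) (fun q hq => by
    obtain ⟨g, rfl⟩ := QuotientGroup.mk'_surjective _ q
    exact (QuotientGroup.eq_one_iff g).mpr fun x hx l hl => hq x (hle g x hx) l (hcen l hl))
  rw [hfr] at key
  have hidx : (𝒢.inertia hne).index = Fintype.card (G ⧸ 𝒢.inertia hne) := by
    rw [Subgroup.index, Nat.card_eq_fintype_card]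
  rw [hidx]
  exact (Nat.pow_dvd_pow_iff two_ne_zero).mp ⟨_, key⟩

end Forward

end Grd

/-! ### Extensions with the unique product property -/

theorem UniqueProds.of_subsingleton' {H : Type*} [Mul H] [Subsingleton H] : UniqueProds H :=
  ⟨fun {_ _} ⟨a, ha⟩ ⟨b, hb⟩ => ⟨a, ha, b, hb, UniqueMul.of_subsingleton⟩⟩

/-- The unique product property is inherited by extensions. -/
theorem UniqueProds.of_ker {H L : Type*} [Group H] [Group L] (f : H →* L) [UniqueProds L]
    (hk : UniqueProds f.ker) : UniqueProds H := by
  classical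
  refine ⟨fun {A B} hA hB => ?_⟩
  obtain ⟨x, hx, y, hy, hu⟩ := uniqueMul_of_nonempty (hA.image f) (hB.image f)
  obtain ⟨a, ha, rfl⟩ := Finset.mem_image.mp hx
  obtain ⟨b, hb, rfl⟩ := Finset.mem_image.mp hy
  -- translate the fibres over `f a` and `f b` into the kernel
  let A' : Finset f.ker := ((A.filter (f · = f a)).image (a⁻¹ * ·)).subtype (· ∈ f.ker)
  let B' : Finset f.ker := ((B.filter (f · = f b)).image (· * b⁻¹)).subtype (· ∈ f.ker)
  have hA' : A'.Nonempty := ⟨1, by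
    simp only [A', Finset.mem_subtype, Finset.mem_image, Finset.mem_filter]
    exact ⟨a, ⟨ha, rfl⟩, by simp⟩⟩
  have hB' : B'.Nonempty := ⟨1, by
    simp only [B', Finset.mem_subtype, Finset.mem_image, Finset.mem_filter]
    exact ⟨b, ⟨hb, rfl⟩, by simp⟩⟩
  obtain ⟨s, hs, t, ht, hst⟩ := hk.uniqueMul_of_nonempty hA' hB'
  obtain ⟨a₁, ha₁, has⟩ := Finset.mem_image.mp (Finset.mem_subtype.mp hs)
  obtain ⟨b₁, hb₁, hbt⟩ := Finset.mem_image.mp (Finset.mem_subtype.mp ht)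
  rw [Finset.mem_filter] at ha₁ hb₁
  refine ⟨a₁, ha₁.1, b₁, hb₁.1,
    UniqueMul.of_image_filter f.toMulHom ha₁.2 hb₁.2 hu fun c e hc he hce => ?_⟩
  have hc' : f c = f a := (Finset.mem_filter.mp hc).2
  have he' : f e = f b := (Finset.mem_filter.mp he).2
  have h1 : (⟨a⁻¹ * c, by rw [MonoidHom.mem_ker, map_mul, hc', map_inv, inv_mul_cancel]⟩ :
      f.ker) ∈ A' := Finset.mem_subtype.mpr (Finset.mem_image.mpr ⟨c, hc, rfl⟩)
  have h2 : (⟨e * b⁻¹, by rw [MonoidHom.mem_ker, map_mul, he', map_inv, mul_inv_cancel]⟩ :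
      f.ker) ∈ B' := Finset.mem_subtype.mpr (Finset.mem_image.mpr ⟨e, he, rfl⟩)
  have h3 := hst h1 h2 (Subtype.ext (by
    simp only [Subgroup.coe_mul]
    rw [← has, ← hbt]
    calc a⁻¹ * c * (e * b⁻¹) = a⁻¹ * (c * e) * b⁻¹ := by simp only [mul_assoc]
      _ = a⁻¹ * a₁ * (b₁ * b⁻¹) := by rw [hce]; simp only [mul_assoc]))
  have h4 := congrArg Subtype.val h3.1
  have h5 := congrArg Subtype.val h3.2
  rw [← has] at h4
  rw [← hbt] at h5
  exact ⟨mul_left_cancel h4, mul_right_cancel h5⟩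

/-- The abelianization of a free group is free abelian. -/
theorem uniqueProds_abelianization (F : Type*) [Group F] [IsFreeGroup F] :
    UniqueProds (Abelianization F) := by
  have e1 : Abelianization F ≃* Abelianization (FreeGroup (IsFreeGroup.Generators F)) :=
    (IsFreeGroup.toFreeGroup F).abelianizationCongr
  let f : Abelianization (FreeGroup (IsFreeGroup.Generators F)) ≃*
    Multiplicative (FreeAbelianGroup (IsFreeGroup.Generators F)) := MulEquiv.refl _
  exact UniqueProds.of_injective_mulHom (e1.trans f).toMulHom (e1.trans f).injective inferInstance

section Extension

variable {F : Type*} [Group F] [IsFreeGroup F] (S : Subgroup F) [S.Normal]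

/-- For `S ≤ T ≤ F` with `F` free, the unique product property for the image of `⁅T, T⁆` in
`F ⧸ ⁅S, S⁆` implies that for the image of `T`, because `T` is free and so has torsion-free
abelianization. -/
theorem uniqueProds_map_of_commutator (T : Subgroup F) (hST : S ≤ T)
    (h : UniqueProds (⁅T, T⁆.map (QuotientGroup.mk' ⁅S, S⁆))) :
    UniqueProds (T.map (QuotientGroup.mk' ⁅S, S⁆)) := by
  let q := QuotientGroup.mk' ⁅S, S⁆
  have hq := q.subgroupMap_surjective T
  have hker : (q.subgroupMap T).ker ≤ (Abelianization.of (G := T)).ker := by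
    intro t ht
    rw [MonoidHom.mem_ker] at ht
    have h1 : (t : F) ∈ ⁅S, S⁆ := by
      rw [← QuotientGroup.eq_one_iff]
      exact congrArg Subtype.val ht
    rw [Abelianization.ker_of]
    have h2 := Subgroup.commutator_mono hST hST h1
    rw [← Subgroup.map_subtype_commutator] at h2
    obtain ⟨t', ht', hh⟩ := h2
    rwa [← Subtype.ext (a1 := t') hh]
  let f : T.map q →* Abelianization T :=
    (q.subgroupMap T).liftOfSurjective hq ⟨Abelianization.of, hker⟩
  have hf : ∀ t, f (q.subgroupMap T t) = Abelianization.of t := fun t =>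
    MonoidHom.liftOfRightInverse_comp_apply _ _ _ ⟨Abelianization.of, hker⟩ t
  have := uniqueProds_abelianization T
  refine UniqueProds.of_ker f ?_
  have hmem : ∀ x : f.ker, ((x : T.map q) : F ⧸ ⁅S, S⁆) ∈ ⁅T, T⁆.map q := by
    rintro ⟨x, hx⟩
    obtain ⟨t, rfl⟩ := hq x
    rw [MonoidHom.mem_ker, hf, ← MonoidHom.mem_ker, Abelianization.ker_of] at hx
    refine ⟨t, ?_, rfl⟩
    rw [← Subgroup.map_subtype_commutator]
    exact ⟨t, hx, rfl⟩
  refine UniqueProds.of_injective_mulHom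
    (⟨fun x => ⟨_, hmem x⟩, fun x y => rfl⟩ : f.ker →ₙ* ⁅T, T⁆.map q) ?_ h
  intro x y hxy
  exact Subtype.ext (Subtype.ext (by
    simpa using congrArg Subtype.val hxy))

theorem Subgroup.uniqueProds_of_le {Γ : Type*} [Group Γ] {H K : Subgroup Γ} (hle : H ≤ K)
    (h : UniqueProds K) : UniqueProds H :=
  UniqueProds.of_injective_mulHom (Subgroup.inclusion hle).toMulHom
    (Subgroup.inclusion_injective hle) h

/-- Over a solvable subgroup `P` of `Q`, the preimage of `P` in `F ⧸ ⁅S, S⁆`, where `S` is the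
kernel of `r`, has the unique product property: induct along the derived series of `P`. -/
theorem uniqueProds_of_isSolvable {Q : Type*} [Group Q] [Finite Q] (r : F →* Q)
    (P : Subgroup Q) (hP : Group.IsSolvable P) :
    UniqueProds ((P.comap r).map (QuotientGroup.mk' ⁅r.ker, r.ker⁆)) := by
  induction P using WellFoundedLT.induction with
  | ind P ih =>
    refine uniqueProds_map_of_commutator r.ker _ (MonoidHom.ker_le_comap r P) ?_
    by_cases hbot : P = ⊥
    · subst hbot
      rw [MonoidHom.comap_bot]
      have h0 : ⁅r.ker, r.ker⁆.map (QuotientGroup.mk' ⁅r.ker, r.ker⁆) = ⊥ := by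
        rw [Subgroup.map_eq_bot_iff, QuotientGroup.ker_mk']
      rw [h0]
      exact UniqueProds.of_subsingleton'
    · have hlt : ⁅P, P⁆ < P := by
        have := (Subgroup.nontrivial_iff_ne_bot P).mpr hbot
        rw [← Subgroup.map_subtype_commutator]
        conv_rhs => rw [← P.range_subtype, MonoidHom.range_eq_map]
        rw [Subgroup.map_subtype_lt_map_subtype]
        exact Group.IsSolvable.commutator_lt_top_of_nontrivial P
      refine Subgroup.uniqueProds_of_le (Subgroup.map_mono ?_) (ih _ hlt
        (Group.isSolvable_of_isSolvable_injective (Subgroup.inclusion_injective hlt.le)))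
      rw [← Subgroup.map_le_iff_le_comap, Subgroup.map_commutator]
      exact Subgroup.commutator_mono (Subgroup.map_comap_le _ _) (Subgroup.map_comap_le _ _)

end Extension

/-- The universal extension used for the construction: with `F` free on `G` and one further
letter mapping to `1`, and `S` (here `r.ker`) the preimage of `A`, the group is `F ⧸ ⁅S, S⁆`.
The preimage of `A` in it is abelian, is its own centralizer, and the preimages of solvable
subgroups have the unique product property. -/
theorem exists_extension {G : Type} [Group G] [Finite G] (A : Subgroup G) [A.Normal]
    (hA : ∀ a b : A, a * b = b * a) :
    ∃ (Γ : Type) (_ : Group Γ) (π : Γ →* G), Function.Surjective π ∧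
      (∀ x y, π x ∈ A → π y ∈ A → x * y = y * x) ∧
      (∀ x, (∀ y, π y ∈ A → x * y = y * x) → π x ∈ A) ∧
      (∀ P : Subgroup G, Group.IsSolvable P → UniqueProds (P.comap π)) := by
  classical
  let p : FreeGroup (Option G) →* G := FreeGroup.lift fun o => o.elim 1 id
  let r : FreeGroup (Option G) →* G ⧸ A := (QuotientGroup.mk' A).comp p
  have hr : ∀ x, x ∈ r.ker ↔ p x ∈ A := fun x => by
    rw [MonoidHom.mem_ker]; exact QuotientGroup.eq_one_iff _
  have hK : ⁅r.ker, r.ker⁆ ≤ p.ker := by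
    rw [Subgroup.commutator_le]
    intro x hx y hy
    rw [MonoidHom.mem_ker, map_commutatorElement, commutatorElement_eq_one_iff_mul_comm]
    exact congrArg Subtype.val (hA ⟨_, (hr x).mp hx⟩ ⟨_, (hr y).mp hy⟩)
  let π : FreeGroup (Option G) ⧸ ⁅r.ker, r.ker⁆ →* G := QuotientGroup.lift _ p hK
  have hπ : ∀ x : FreeGroup (Option G), π (QuotientGroup.mk' ⁅r.ker, r.ker⁆ x) = p x :=
    fun x => rfl
  have hsurj := QuotientGroup.mk'_surjective ⁅r.ker, r.ker⁆
  refine ⟨FreeGroup (Option G) ⧸ ⁅r.ker, r.ker⁆, inferInstance, π, ?_, ?_, ?_, ?_⟩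
  · intro g
    exact ⟨QuotientGroup.mk' _ (FreeGroup.of (some g)), by rw [hπ]; simp [p]⟩
  · intro x y hx hy
    obtain ⟨x, rfl⟩ := hsurj x
    obtain ⟨y, rfl⟩ := hsurj y
    rw [hπ, ← hr] at hx hy
    rw [← commutatorElement_eq_one_iff_mul_comm, ← map_commutatorElement]
    exact (QuotientGroup.eq_one_iff _).mpr (Subgroup.commutator_mem_commutator hx hy)
  · intro x hx
    obtain ⟨x, rfl⟩ := hsurj x
    -- a homomorphism to the wreath product `ℤ ≀ G ⧸ A` compatible with `r`, sending the extra
    -- letter to the basis function `δ` at `1`, which only elements over `1` centralize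
    let δ : G ⧸ A → Multiplicative ℤ := Pi.mulSingle 1 (Multiplicative.ofAdd 1)
    let ψ : FreeGroup (Option G) →* Multiplicative ℤ ≀ᵣ (G ⧸ A) :=
      FreeGroup.lift fun o => o.elim ⟨δ, 1⟩ fun g => RegularWreathProduct.inl (g : G ⧸ A)
    have hψr : RegularWreathProduct.rightHom.comp ψ = r := by
      ext o
      cases o <;> simp [ψ, r, p]
    have hψr' : ∀ x, (ψ x).right = r x := fun x => DFunLike.congr_fun hψr x
    have hψK : ⁅r.ker, r.ker⁆ ≤ ψ.ker := by
      rw [Subgroup.commutator_le]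
      intro x hx y hy
      rw [MonoidHom.mem_ker] at hx hy ⊢
      rw [map_commutatorElement, commutatorElement_eq_one_iff_mul_comm]
      ext z
      · simp [hψr', hx, hy, mul_comm]
      · simp [hψr', hx, hy]
    have h1 := hx (QuotientGroup.mk' _ (FreeGroup.of none)) (by rw [hπ]; simp [p, A.one_mem])
    rw [← commutatorElement_eq_one_iff_mul_comm, ← map_commutatorElement] at h1
    have h2 := hψK ((QuotientGroup.eq_one_iff _).mp h1)
    rw [MonoidHom.mem_ker, map_commutatorElement, commutatorElement_eq_one_iff_mul_comm] at h2
    have hn : ψ (FreeGroup.of none) = ⟨δ, 1⟩ := by simp [ψ]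
    rw [hn] at h2
    have h3 := congrFun (congrArg RegularWreathProduct.left h2) 1
    simp only [RegularWreathProduct.mul_left, Pi.mul_apply, mul_one, inv_one] at h3
    rw [mul_comm] at h3
    have h4 := mul_right_cancel h3
    rw [hπ, ← hr, MonoidHom.mem_ker, ← hψr']
    by_contra hne
    simp only [δ, Pi.mulSingle_apply, inv_eq_one, hne, if_false, if_true] at h4
    exact absurd (congrArg Multiplicative.toAdd h4) (by simp)
  · intro P hP
    have h1 := uniqueProds_of_isSolvable r (P.map (QuotientGroup.mk' A))
      (Group.isSolvable_of_surjective ((QuotientGroup.mk' A).subgroupMap_surjective P))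
    refine Subgroup.uniqueProds_of_le ?_ h1
    intro x hx
    obtain ⟨x, rfl⟩ := hsurj x
    exact ⟨x, ⟨p x, hx, rfl⟩, rfl⟩

/-! ### A criterion for crossed products to be division rings -/

/-- A finite-dimensional domain over a division ring is a division ring, so its dimension
divides that of each of its modules. -/
theorem finrank_dvd_finrank_of_domain (K E I : Type*) [DivisionRing K] [Ring E] [Nontrivial E]
    [NoZeroDivisors E] [Module K E] [IsScalarTower K E E] [Module.Finite K E] [AddCommGroup I]
    [Module E I] [Module K I] [IsScalarTower K E I] :
    Module.finrank K E ∣ Module.finrank K I := by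
  have hleft : ∀ x : E, x ≠ 0 → ∃ y, y * x = 1 := by
    intro x hx
    let f : E →ₗ[K] E :=
      { toFun := fun y => y * x
        map_add' := fun y z => add_mul y z x
        map_smul' := fun c y => smul_mul_assoc c y x }
    have hf : Function.Injective f := fun y z h => mul_right_cancel₀ hx h
    exact (LinearMap.injective_iff_surjective.mp hf) 1
  have hunit : ∀ x : E, IsUnit x ∨ x = 0 := by
    intro x
    by_cases hx : x = 0
    · exact Or.inr hx
    left
    obtain ⟨y, hy⟩ := hleft x hx
    have hy0 : y ≠ 0 := by rintro rfl; simp at hy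
    obtain ⟨z, hz⟩ := hleft y hy0
    have hzx : z = x := by
      calc z = z * (y * x) := by rw [hy, mul_one]
        _ = x := by rw [← mul_assoc, hz, one_mul]
    exact ⟨⟨x, y, hzx ▸ hz, hy⟩, rfl⟩
  let _ : DivisionRing E := DivisionRing.ofIsUnitOrEqZero hunit
  exact ⟨_, (Module.finrank_mul_finrank K E I).symm⟩

namespace Grd

section Criterion

variable {𝕜 G D : Type*} [Field 𝕜] [Group G] [Fintype G] [Ring D] [Algebra 𝕜 D]

theorem unit_inv_mem {𝒟 : Grd 𝕜 G D} {w : Dˣ} {g : G} (h : (w : D) ∈ 𝒟.comp g) :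
    ((w⁻¹ : Dˣ) : D) ∈ 𝒟.comp g⁻¹ :=
  inv_mem_of_mul_eq_one h w.mul_inv w.inv_mul

open scoped Classical in
/-- The subring of elements with degrees in `P` is free over the unit component,
with basis indexed by `P`. -/
noncomputable def subEquiv (𝒟 : Grd 𝕜 G D) (w : G → Dˣ) (hw : ∀ g, (w g : D) ∈ 𝒟.comp g)
    (P : Subgroup G) : 𝒟.sub P ≃+ (P → 𝒟.sub ⊥) where
  toFun x p := ⟨𝒟.pr p x * ((w p)⁻¹ : Dˣ), mem_sub_bot.mpr (by
    simpa using mul_mem (𝒟.pr_mem (p : G) (x : D)) (unit_inv_mem (hw p)))⟩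
  invFun c := ⟨∑ p : P, (c p : D) * w p, Subring.sum_mem _ fun p _ => comp_le_sub p.2 (by
    simpa using mul_mem (mem_sub_bot.mp (c p).2) (hw p))⟩
  map_add' x y := by
    ext p
    simp [add_mul]
  left_inv x := by
    classical
    refine Subtype.ext ?_
    simp only [Units.inv_mul_cancel_right]
    conv_rhs => rw [← 𝒟.sum_pr (x : D)]
    rw [← Finset.sum_subtype (Finset.univ.filter (· ∈ P)) (by simp) (fun g => 𝒟.pr g (x : D))]
    exact Finset.sum_subset (Finset.subset_univ _) fun g _ hg => x.2 g (by simpa using hg)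
  right_inv c := by
    classical
    ext p
    simp only [map_sum]
    have hc : ∀ p : P, (c p : D) * w p ∈ 𝒟.comp p := fun p => by
      simpa using mul_mem (mem_sub_bot.mp (c p).2) (hw p)
    rw [Finset.sum_eq_single p]
    · rw [mem_comp.mp (hc p), Units.mul_inv_cancel_right]
    · intro q _ hq
      exact pr_of_ne (hc q) (fun h => hq (Subtype.ext h.symm))
    · simp

/-- A crossed product over a division ring is a division ring as soon as its restrictions to
the Sylow subgroups are domains: the dimension of a left ideal is divisible by the orders of all
Sylow subgroups. -/
theorem isUnit_of_sylow [Nontrivial D] (𝒟 : Grd 𝕜 G D) (w : G → Dˣ)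
    (hw : ∀ g, (w g : D) ∈ 𝒟.comp g) (hK : ∀ x ∈ 𝒟.comp 1, x ≠ 0 → IsUnit x)
    (hdom : ∀ (p : ℕ) [Fact p.Prime] (P : Sylow p G), ∀ x ∈ 𝒟.sub P, ∀ y ∈ 𝒟.sub P,
      x * y = 0 → x = 0 ∨ y = 0) (x : D) : IsUnit x ∨ x = 0 := by
  classical
  have hKu : ∀ x : 𝒟.sub ⊥, IsUnit x ∨ x = 0 := by
    intro x
    by_cases hx : x = 0
    · exact Or.inr hx
    left
    obtain ⟨v, hv⟩ := hK x (mem_sub_bot.mp x.2) (fun h => hx (Subtype.ext h))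
    have hx1 : (v : D) ∈ 𝒟.comp 1 := hv ▸ mem_sub_bot.mp x.2
    have h1 : ((v⁻¹ : Dˣ) : D) ∈ 𝒟.sub ⊥ := mem_sub_bot.mpr (by simpa using unit_inv_mem hx1)
    exact ⟨⟨x, ⟨_, h1⟩, Subtype.ext (by simp [← hv]), Subtype.ext (by simp [← hv])⟩, rfl⟩
  let _ : DivisionRing (𝒟.sub ⊥) := DivisionRing.ofIsUnitOrEqZero hKu
  have hsmul : ∀ (P : Subgroup G) (t : 𝒟.sub ⊥) (y : 𝒟.sub P) (h : (t : D) * y ∈ 𝒟.sub P),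
      𝒟.subEquiv w hw P ⟨t * y, h⟩ = t • 𝒟.subEquiv w hw P y := by
    intro P t y h
    ext p
    change 𝒟.pr p ((t : D) * y) * _ = (t : D) * (𝒟.pr p y * _)
    rw [pr_mul_left (mem_sub_bot.mp t.2)]
    simp [mul_assoc]
  let eD : D ≃ₗ[𝒟.sub ⊥] ((⊤ : Subgroup G) → 𝒟.sub ⊥) :=
    { toFun := fun y => 𝒟.subEquiv w hw ⊤ ⟨y, fun g hg => absurd (Subgroup.mem_top g) hg⟩
      invFun := fun c => (𝒟.subEquiv w hw ⊤).symm c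
      map_add' := fun y z => (𝒟.subEquiv w hw ⊤).map_add ⟨y, _⟩ ⟨z, _⟩
      map_smul' := fun t y => hsmul ⊤ t ⟨y, _⟩ _
      left_inv := fun y => by simp
      right_inv := fun c => (𝒟.subEquiv w hw ⊤).apply_symm_apply c }
  have hfinD : Module.Finite (𝒟.sub ⊥) D := Module.Finite.equiv eD.symm
  have hfrD : Module.finrank (𝒟.sub ⊥) D = Fintype.card G := by
    rw [eD.finrank_eq, Module.finrank_fintype_fun_eq_card]
    exact Fintype.card_congr Subgroup.topEquiv.toEquiv
  have hdvd : ∀ I : Submodule D D, ∀ (p : ℕ) [Fact p.Prime] (P : Sylow p G),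
      Nat.card P ∣ Module.finrank (𝒟.sub ⊥) I := by
    intro I p _ P
    let inc : 𝒟.sub ⊥ →+* 𝒟.sub (P : Subgroup G) := Subring.inclusion fun y hy g hg =>
      hy g fun h => hg (by rw [Subgroup.mem_bot.mp h]; exact Subgroup.one_mem _)
    let _ : Module (𝒟.sub ⊥) (𝒟.sub (P : Subgroup G)) := Module.compHom _ inc
    have : IsScalarTower (𝒟.sub ⊥) (𝒟.sub (P : Subgroup G)) (𝒟.sub (P : Subgroup G)) :=
      ⟨fun a b c => mul_assoc (inc a) b c⟩
    have : IsScalarTower (𝒟.sub ⊥) (𝒟.sub (P : Subgroup G)) I :=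
      ⟨fun a b c => Subtype.ext (mul_assoc (a : D) (b : D) (c : D))⟩
    have : NoZeroDivisors (𝒟.sub (P : Subgroup G)) := ⟨fun {a b} hab => by
      rcases hdom p P a a.2 b b.2 (congrArg Subtype.val hab) with h | h
      · exact Or.inl (Subtype.ext h)
      · exact Or.inr (Subtype.ext h)⟩
    let eP : 𝒟.sub (P : Subgroup G) ≃ₗ[𝒟.sub ⊥] (↥(P : Subgroup G) → 𝒟.sub ⊥) :=
      { 𝒟.subEquiv w hw P with
        map_smul' := fun t y => hsmul P t y ((inc t) * y).2 }
    have : Module.Finite (𝒟.sub ⊥) (𝒟.sub (P : Subgroup G)) := Module.Finite.equiv eP.symm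
    have h1 := finrank_dvd_finrank_of_domain (𝒟.sub ⊥) (𝒟.sub (P : Subgroup G)) I
    rw [eP.finrank_eq, Module.finrank_fintype_fun_eq_card] at h1
    rwa [Nat.card_eq_fintype_card]
  have hcard : ∀ I : Submodule D D, Fintype.card G ∣ Module.finrank (𝒟.sub ⊥) I := by
    intro I
    rw [← Nat.card_eq_fintype_card, Nat.dvd_iff_prime_pow_dvd_dvd]
    intro p k hp hk
    have : Fact p.Prime := ⟨hp⟩
    obtain ⟨P⟩ := (inferInstance : Nonempty (Sylow p G))
    refine dvd_trans ?_ (hdvd I p P)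
    rw [P.card_eq_multiplicity]
    exact Nat.pow_dvd_pow _ ((hp.pow_dvd_iff_le_factorization Nat.card_pos.ne').mp hk)
  -- a nonzero left ideal has dimension at least `|G| = dim D`, so it is all of `D`
  have hleft : ∀ x : D, x ≠ 0 → ∃ y, y * x = 1 := by
    intro x hx
    let I : Submodule D D := Submodule.span D {x}
    have htop : I.restrictScalars (𝒟.sub ⊥) = ⊤ := by
      refine Submodule.eq_top_of_finrank_eq (le_antisymm (Submodule.finrank_le _) ?_)
      rw [hfrD]
      refine Nat.le_of_dvd ?_ (hcard I)
      rw [Module.finrank_pos_iff_exists_ne_zero]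
      exact ⟨⟨x, Submodule.mem_span_singleton_self x⟩, fun h => hx (congrArg Subtype.val h)⟩
    have h1 : (1 : D) ∈ I.restrictScalars (𝒟.sub ⊥) := by rw [htop]; trivial
    obtain ⟨y, hy⟩ := Submodule.mem_span_singleton.mp h1
    exact ⟨y, hy⟩
  by_cases hx : x = 0
  · exact Or.inr hx
  left
  obtain ⟨y, hy⟩ := hleft x hx
  have hy0 : y ≠ 0 := by rintro rfl; simp at hy
  obtain ⟨z, hz⟩ := hleft y hy0
  have hzx : z = x := by
    calc z = z * (y * x) := by rw [hy, mul_one]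
      _ = x := by rw [← mul_assoc, hz, one_mul]
  exact ⟨⟨x, y, hzx ▸ hz, hy⟩, rfl⟩

end Criterion

end Grd

/-! ### Central localization of graded rings -/

/-- `i : R → D` exhibits `D` as the ring of fractions of `R` with denominators in the submonoid
`S` of central elements, which are regular since `i` is injective. -/
structure IsCentralLoc {𝕜 R D : Type*} [Field 𝕜] [Ring R] [Algebra 𝕜 R] [Ring D] [Algebra 𝕜 D]
    (S : Submonoid R) (i : R →ₐ[𝕜] D) : Prop where
  central : ∀ c ∈ S, ∀ r, c * r = r * c
  inj : Function.Injective i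
  isUnit : ∀ c ∈ S, IsUnit (i c)
  frac : ∀ x, ∃ c ∈ S, ∃ r, i c * x = i r

/-- Central localizations exist, as Ore localizations. -/
theorem exists_isCentralLoc {𝕜 R : Type} [Field 𝕜] [Ring R] [Algebra 𝕜 R] (S : Submonoid R)
    (hS : ∀ c ∈ S, ∀ r, c * r = r * c) (hreg : ∀ c ∈ S, ∀ r, c * r = 0 → r = 0) :
    ∃ (D : Type) (_ : Ring D) (_ : Algebra 𝕜 D) (i : R →ₐ[𝕜] D), IsCentralLoc S i := by
  let _ : OreLocalization.OreSet S :=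
    { ore_right_cancel := fun r₁ r₂ s h => ⟨s, by rw [hS s s.2, hS s s.2, h]⟩
      oreNum := fun r _ => r
      oreDenom := fun _ s => s
      ore_eq := fun r s => hS s s.2 r }
  let i : R →ₐ[𝕜] OreLocalization S R :=
    { OreLocalization.numeratorRingHom with
      commutes' := fun a => rfl }
  have hi : ∀ r, i r = OreLocalization.oreDiv r 1 := fun r => rfl
  refine ⟨OreLocalization S R, inferInstance, inferInstance, i, hS, ?_, ?_, ?_⟩
  · refine OreLocalization.numeratorHom_inj fun c hc => ?_
    intro r hr
    exact hreg c hc r hr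
  · exact fun c hc => OreLocalization.numerator_isUnit (⟨c, hc⟩ : S)
  · intro x
    induction x with
    | _ r s => exact ⟨s, s.2, r, by rw [hi, hi, OreLocalization.mul_cancel]⟩

namespace IsCentralLoc

variable {𝕜 R D : Type*} [Field 𝕜] [Ring R] [Algebra 𝕜 R] [Ring D] [Algebra 𝕜 D]
  {S : Submonoid R} {i : R →ₐ[𝕜] D}

theorem cancel (h : IsCentralLoc S i) {c : R} (hc : c ∈ S) {x y : D} (hxy : i c * x = i c * y) : x = y :=
  (h.isUnit c hc).mul_left_cancel hxy

theorem comm (h : IsCentralLoc S i) {c : R} (hc : c ∈ S) (x : D) : i c * x = x * i c := by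
  obtain ⟨e, he, r, hr⟩ := h.frac x
  refine h.cancel he ?_
  rw [← mul_assoc, ← map_mul, h.central e he, map_mul, mul_assoc, hr, ← mul_assoc, hr, ← map_mul,
    ← map_mul, h.central c hc]

theorem mul_eq (h : IsCentralLoc S i) {c e r s : R} {x y : D} (he : e ∈ S) (hx : i c * x = i r)
    (hy : i e * y = i s) : i (c * e) * (x * y) = i (r * s) := by
  rw [map_mul, map_mul, ← hx, ← hy, mul_assoc, ← mul_assoc (i e) x y, h.comm he x]
  simp only [mul_assoc]

theorem eq_zero_iff (h : IsCentralLoc S i) {c r : R} {x : D} (hc : c ∈ S) (hx : i c * x = i r) : x = 0 ↔ r = 0 := by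
  constructor
  · rintro rfl
    rw [mul_zero] at hx
    exact h.inj (by rw [← hx, map_zero])
  · rintro rfl
    exact h.cancel hc (by rw [hx, map_zero, mul_zero])

/-- A grading for which the denominators have degree `1` extends to the ring of fractions. -/
theorem exists_grd (h : IsCentralLoc S i) {G : Type*} [Group G] [Fintype G] (𝒢 : Grd 𝕜 G R)
    (hS : ∀ c ∈ S, c ∈ 𝒢.comp 1) :
    ∃ 𝒟 : Grd 𝕜 G D, ∀ g, ∀ c ∈ S, ∀ r x, i c * x = i r → i c * 𝒟.pr g x = i (𝒢.pr g r) := by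
  have hex : ∀ g x, ∃ y, ∀ c ∈ S, ∀ r, i c * x = i r → i c * y = i (𝒢.pr g r) := by
    intro g x
    obtain ⟨c, hc, r, hr⟩ := h.frac x
    obtain ⟨v, hv⟩ := h.isUnit c hc
    refine ⟨((v⁻¹ : Dˣ) : D) * i (𝒢.pr g r), fun e he s hs => ?_⟩
    refine h.cancel hc ?_
    have h1 : c * s = e * r := h.inj (by
      rw [map_mul, map_mul, ← hs, ← hr, ← mul_assoc, ← map_mul, h.central c hc, map_mul, mul_assoc])
    have h2 : c * 𝒢.pr g s = e * 𝒢.pr g r := by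
      have := congrArg (𝒢.pr g) h1
      rw [Grd.pr_mul_left (hS c hc), Grd.pr_mul_left (hS e he)] at this
      simpa using this
    rw [← mul_assoc, h.comm hc, mul_assoc, ← hv, Units.mul_inv_cancel_left, hv, ← map_mul,
      ← map_mul, h2]
  choose pr hpr using hex
  have hzero : ∀ g c r x, c ∈ S → i c * x = i r → 𝒢.pr g r = 0 → pr g x = 0 := by
    intro g c r x hc hx h0
    refine h.cancel hc ?_
    rw [hpr g x c hc r hx, h0, map_zero, mul_zero]
  refine ⟨{
    pr := fun g =>
      { toFun := pr g
        map_add' := fun x y => ?_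
        map_smul' := fun a x => ?_ }
    sum_pr := fun x => ?_
    pr_same := fun g x => ?_
    pr_ne := fun g k x hgk => ?_
    pr_mul := fun g k x y => ?_ }, fun g c hc r x hx => hpr g x c hc r hx⟩
  · obtain ⟨c, hc, r, hr⟩ := h.frac x
    obtain ⟨e, he, s, hs⟩ := h.frac y
    have h1 : i (c * e) * x = i (e * r) := by
      rw [h.central c hc, map_mul, map_mul, mul_assoc, hr]
    have h2 : i (c * e) * y = i (c * s) := by
      rw [map_mul, map_mul, mul_assoc, hs]
    have hce := S.mul_mem hc he
    refine h.cancel hce ?_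
    rw [hpr g (x + y) _ hce (e * r + c * s) (by rw [mul_add, h1, h2, map_add]), mul_add,
      hpr g x _ hce _ h1, hpr g y _ hce _ h2, map_add, map_add]
  · obtain ⟨c, hc, r, hr⟩ := h.frac x
    refine h.cancel hc ?_
    rw [hpr g (a • x) c hc (a • r) (by rw [mul_smul_comm, hr, map_smul]), RingHom.id_apply,
      mul_smul_comm, hpr g x c hc r hr, map_smul, map_smul]
  · obtain ⟨c, hc, r, hr⟩ := h.frac x
    refine h.cancel hc ?_
    simp only [LinearMap.coe_mk, AddHom.coe_mk]
    rw [Finset.mul_sum, Finset.sum_congr rfl fun g _ => hpr g x c hc r hr, ← map_sum, 𝒢.sum_pr, hr]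
  · obtain ⟨c, hc, r, hr⟩ := h.frac x
    refine h.cancel hc ?_
    have h1 := hpr g x c hc r hr
    change i c * pr g (pr g x) = i c * pr g x
    rw [hpr g _ c hc _ h1, 𝒢.pr_same, h1]
  · obtain ⟨c, hc, r, hr⟩ := h.frac x
    exact hzero g c _ _ hc (hpr k x c hc r hr) (𝒢.pr_ne g k r hgk)
  · obtain ⟨c, hc, r, hr⟩ := h.frac x
    obtain ⟨e, he, s, hs⟩ := h.frac y
    have h1 := h.mul_eq he (hpr g x c hc r hr) (hpr k y e he s hs)
    have hce := S.mul_mem hc he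
    refine h.cancel hce ?_
    change i (c * e) * pr (g * k) (pr g x * pr k y) = i (c * e) * (pr g x * pr k y)
    rw [hpr _ _ _ hce _ h1, 𝒢.pr_mul, h1]

end IsCentralLoc

/-! ### Norms -/

namespace Grd

section Norm

variable {𝕜 G R : Type*} [Field 𝕜] [Group G] [Fintype G] [Ring R] [Algebra 𝕜 R]

theorem comm_of_comm_units (𝒢 : Grd 𝕜 G R) (w : G → Rˣ) (hw : ∀ g, (w g : R) ∈ 𝒢.comp g) {c : R}
    (h1 : ∀ t ∈ 𝒢.comp 1, c * t = t * c) (hc : ∀ g, c * w g = w g * c) (x : R) :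
    c * x = x * c := by
  rw [← 𝒢.sum_pr x, Finset.mul_sum, Finset.sum_mul]
  refine Finset.sum_congr rfl fun g _ => ?_
  have hm : 𝒢.pr g x * ((w g)⁻¹ : Rˣ) ∈ 𝒢.comp 1 := by
    have := mul_mem (𝒢.pr_mem g x) (unit_inv_mem (hw g))
    rwa [mul_inv_cancel] at this
  have hx : 𝒢.pr g x = 𝒢.pr g x * ((w g)⁻¹ : Rˣ) * w g := by simp
  rw [hx, ← mul_assoc, h1 _ hm, mul_assoc, hc, ← mul_assoc]

theorem conj_unit_mem {𝒢 : Grd 𝕜 G R} {w : Rˣ} {g : G} (hw : (w : R) ∈ 𝒢.comp g) {b : R}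
    (hb : b ∈ 𝒢.comp 1) : (w : R) * b * ((w⁻¹ : Rˣ) : R) ∈ 𝒢.comp 1 := by
  have := mul_mem (mul_mem hw hb) (unit_inv_mem hw)
  rwa [mul_one, mul_inv_cancel] at this

/-- When the unit component is a commutative domain, each of its nonzero elements divides a nonzero
central element, namely the product of its conjugates by the `w g`. -/
theorem exists_central_multiple (𝒢 : Grd 𝕜 G R) (w : G → Rˣ) (hw : ∀ g, (w g : R) ∈ 𝒢.comp g)
    (hcomm : ∀ x ∈ 𝒢.comp 1, ∀ y ∈ 𝒢.comp 1, x * y = y * x)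
    (hdom : ∀ x ∈ 𝒢.comp 1, ∀ y ∈ 𝒢.comp 1, x * y = 0 → x = 0 ∨ y = 0) {b : R}
    (hb : b ∈ 𝒢.comp 1) (hb0 : b ≠ 0) :
    ∃ b' ∈ 𝒢.comp 1, b * b' ≠ 0 ∧ ∀ r, b * b' * r = r * (b * b') := by
  classical
  let _ : CommRing (𝒢.sub ⊥) :=
    { (inferInstance : Ring (𝒢.sub ⊥)) with
      mul_comm := fun x y => Subtype.ext (hcomm _ (mem_sub_bot.mp x.2) _ (mem_sub_bot.mp y.2)) }
  have hnt : Nontrivial (𝒢.sub ⊥) :=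
    ⟨⟨b, mem_sub_bot.mpr hb⟩, 0, fun h => hb0 (congrArg Subtype.val h)⟩
  have : NoZeroDivisors (𝒢.sub ⊥) := ⟨fun {x y} hxy => by
    rcases hdom x (mem_sub_bot.mp x.2) y (mem_sub_bot.mp y.2) (congrArg Subtype.val hxy) with h | h
    · exact Or.inl (Subtype.ext h)
    · exact Or.inr (Subtype.ext h)⟩
  let φ : G → 𝒢.sub ⊥ →+* 𝒢.sub ⊥ := fun g =>
    { toFun := fun x => ⟨w g * x * ((w g)⁻¹ : Rˣ),
        mem_sub_bot.mpr (conj_unit_mem (hw g) (mem_sub_bot.mp x.2))⟩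
      map_one' := Subtype.ext (by simp)
      map_zero' := Subtype.ext (by simp)
      map_add' := fun x y => Subtype.ext (by simp [mul_add, add_mul])
      map_mul' := fun x y => Subtype.ext (by simp [mul_assoc]) }
  have hφ : ∀ g x, (φ g x : R) = w g * x * ((w g)⁻¹ : Rˣ) := fun g x => rfl
  let β : 𝒢.sub ⊥ := ⟨b, mem_sub_bot.mpr hb⟩
  have hφφ : ∀ h g, φ h (φ g β) = φ (h * g) β := by
    intro h g
    apply Subtype.ext
    rw [hφ, hφ, hφ]
    -- `w h * w g` and `w (h * g)` differ by a unit of the commutative unit component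
    have hm : ((w h * w g * (w (h * g))⁻¹ : Rˣ) : R) ∈ 𝒢.comp 1 := by
      have := mul_mem (mul_mem (hw h) (hw g)) (unit_inv_mem (hw (h * g)))
      rw [mul_inv_cancel] at this
      simpa using this
    have hc := hcomm _ hm _ (conj_unit_mem (hw (h * g)) hb)
    have e : (w h : R) * (w g * b * ((w g)⁻¹ : Rˣ)) * ((w h)⁻¹ : Rˣ) =
        ((w h * w g * (w (h * g))⁻¹ : Rˣ) : R) *
          (w (h * g) * b * ((w (h * g))⁻¹ : Rˣ)) *
            (((w h * w g * (w (h * g))⁻¹)⁻¹ : Rˣ) : R) := by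
      simp [mul_assoc]
    change (w h : R) * (w g * b * ((w g)⁻¹ : Rˣ)) * ((w h)⁻¹ : Rˣ) =
      w (h * g) * b * ((w (h * g))⁻¹ : Rˣ)
    rw [e, hc, mul_assoc, Units.mul_inv, mul_one]
  let N : 𝒢.sub ⊥ := ∏ g, φ g β
  have hφN : ∀ h, φ h N = N := by
    intro h
    rw [map_prod]
    exact Fintype.prod_equiv (Equiv.mulLeft h) _ _ fun g => hφφ h g
  have hβ0 : β ≠ 0 := fun h => hb0 (congrArg Subtype.val h)
  have hN0 : N ≠ 0 := by
    refine Finset.prod_ne_zero_iff.mpr fun g _ h => hb0 ?_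
    have h' : (w g : R) * b * ((w g)⁻¹ : Rˣ) = 0 := congrArg Subtype.val h
    rw [Units.mul_left_eq_zero, Units.mul_right_eq_zero] at h'
    exact h'
  have h1 : φ 1 β = β := by
    apply Subtype.ext
    rw [hφ, hcomm _ (hw 1) _ (mem_sub_bot.mp β.2), mul_assoc, Units.mul_inv, mul_one]
  have hdvd : β ∣ N := by
    rw [← h1]
    exact Finset.dvd_prod_of_mem (fun g => φ g β) (Finset.mem_univ 1)
  obtain ⟨β', hβ'⟩ := hdvd
  have hN : b * β' = (N : R) := (congrArg Subtype.val hβ').symm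
  refine ⟨β', mem_sub_bot.mp β'.2, ?_, ?_⟩ <;> rw [hN]
  · exact fun h => hN0 (Subtype.ext h)
  · refine 𝒢.comm_of_comm_units w hw (hcomm _ (mem_sub_bot.mp N.2)) fun g => ?_
    have := congrArg Subtype.val (hφN g)
    rw [hφ, Units.mul_inv_eq_iff_eq_mul] at this
    exact this.symm

end Norm

end Grd

/-! ### Division rings from crossed products -/

/-- Inverting the nonzero central elements of degree `1` of a suitable `G`-crossed product `R` gives
a division ring of degree `A.index`: the unit component becomes a field by
`exists_central_multiple`, the Sylow criterion applies because Sylow subgroups are solvable, and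
the part graded by `A` is a field on which `G ⧸ A` acts faithfully, so that `finrank_center` computes
the degree. -/
theorem Grd.exists_divisionRing {𝕜 G R : Type} [Field 𝕜] [Group G] [Fintype G] [Ring R]
    [Nontrivial R] [Algebra 𝕜 R] (𝒢 : Grd 𝕜 G R) (w : G → Rˣ) (hw : ∀ g, (w g : R) ∈ 𝒢.comp g)
    (A : Subgroup G) [A.Normal] (hcomm : ∀ x ∈ 𝒢.sub A, ∀ y ∈ 𝒢.sub A, x * y = y * x)
    (hact : ∀ g, (∀ y ∈ 𝒢.sub A, (w g : R) * y = y * w g) → g ∈ A)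
    (hdom : ∀ P : Subgroup G, Group.IsSolvable P → ∀ x ∈ 𝒢.sub P, ∀ y ∈ 𝒢.sub P,
      x * y = 0 → x = 0 ∨ y = 0) :
    ∃ (D : Type) (_ : DivisionRing D) (_ : Algebra 𝕜 D) (𝒟 : Grd 𝕜 G D),
      (∀ g, 𝒟.comp g ≠ ⊥) ∧ Module.finrank (Subring.center D) D = A.index ^ 2 := by
  classical
  have hsub1 : ∀ P : Subgroup G, ∀ x ∈ 𝒢.comp 1, x ∈ 𝒢.sub P := fun P x hx =>
    Grd.comp_le_sub (Subgroup.one_mem P) hx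
  have hcomm1 : ∀ x ∈ 𝒢.comp 1, ∀ y ∈ 𝒢.comp 1, x * y = y * x := fun x hx y hy =>
    hcomm x (hsub1 A x hx) y (hsub1 A y hy)
  have hdom1 : ∀ x ∈ 𝒢.comp 1, ∀ y ∈ 𝒢.comp 1, x * y = 0 → x = 0 ∨ y = 0 := fun x hx y hy =>
    hdom ⊥ inferInstance x (hsub1 _ x hx) y (hsub1 _ y hy)
  let S : Submonoid R :=
    { carrier := {c | c ≠ 0 ∧ c ∈ 𝒢.comp 1 ∧ ∀ r, c * r = r * c}
      one_mem' := ⟨one_ne_zero, Grd.one_mem 𝒢, fun r => by simp⟩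
      mul_mem' := by
        rintro a b ⟨ha0, ha, hac⟩ ⟨hb0, hb, hbc⟩
        refine ⟨fun h => (hdom1 a ha b hb h).elim ha0 hb0, ?_, fun r => ?_⟩
        · simpa using Grd.mul_mem ha hb
        · rw [mul_assoc, hbc, ← mul_assoc, hac, mul_assoc] }
  have hreg : ∀ c ∈ S, ∀ r, c * r = 0 → r = 0 := by
    rintro c ⟨hc0, hc, -⟩ r hr
    refine Grd.ext_pr (𝒢 := 𝒢) fun g => ?_
    rw [map_zero]
    have h1 : c * 𝒢.pr g r = 0 := by
      have := Grd.pr_mul_left hc g r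
      rw [hr, map_zero, inv_one, one_mul] at this
      exact this.symm
    have hm : 𝒢.pr g r * ((w g)⁻¹ : Rˣ) ∈ 𝒢.comp 1 := by
      have := Grd.mul_mem (𝒢.pr_mem g r) (Grd.unit_inv_mem (hw g))
      rwa [mul_inv_cancel] at this
    rcases hdom1 c hc _ hm (by rw [← mul_assoc, h1, zero_mul]) with h | h
    · exact absurd h hc0
    · rwa [Units.mul_left_eq_zero] at h
  obtain ⟨D, _, _, i, hi⟩ := exists_isCentralLoc (𝕜 := 𝕜) S (fun c hc => hc.2.2) hreg
  obtain ⟨𝒟, h𝒟⟩ := hi.exists_grd 𝒢 fun c hc => hc.2.1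
  have hnt : Nontrivial D := hi.inj.nontrivial
  have hpr : ∀ g r, 𝒟.pr g (i r) = i (𝒢.pr g r) := fun g r => by
    simpa using h𝒟 g 1 (Submonoid.one_mem S) r (i r) (by simp)
  have hmem : ∀ g r, r ∈ 𝒢.comp g → i r ∈ 𝒟.comp g := fun g r hr => by
    rw [Grd.mem_comp, hpr, Grd.mem_comp.mp hr]
  have hmem' : ∀ c ∈ S, ∀ r x, i c * x = i r → ∀ g, 𝒟.pr g x = 0 → 𝒢.pr g r = 0 := by
    intro c hc r x hx g hg
    apply hi.inj
    rw [← h𝒟 g c hc r x hx, hg, mul_zero, map_zero]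
  have hsub : ∀ P : Subgroup G, ∀ x ∈ 𝒟.sub P, ∃ c ∈ S, ∃ r ∈ 𝒢.sub P, i c * x = i r := by
    intro P x hx
    obtain ⟨c, hc, r, hr⟩ := hi.frac x
    exact ⟨c, hc, r, Grd.mem_sub.mpr fun g hg =>
      hmem' c hc r x hr g (Grd.mem_sub.mp hx g hg), hr⟩
  have hsubi : ∀ P : Subgroup G, ∀ r ∈ 𝒢.sub P, i r ∈ 𝒟.sub P := fun P r hr =>
    Grd.mem_sub.mpr fun g hg => by rw [hpr, Grd.mem_sub.mp hr g hg, map_zero]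
  let v : G → Dˣ := fun g => Units.map (i : R →* D) (w g)
  have hv : ∀ g, (v g : D) ∈ 𝒟.comp g := fun g => hmem g _ (hw g)
  have hK : ∀ x ∈ 𝒟.comp 1, x ≠ 0 → IsUnit x := by
    intro x hx hx0
    obtain ⟨c, hc, r, hr, hcx⟩ := hsub ⊥ x (Grd.mem_sub_bot.mpr hx)
    rw [Grd.mem_sub_bot] at hr
    have hr0 : r ≠ 0 := fun h => hx0 ((hi.eq_zero_iff hc hcx).mpr h)
    obtain ⟨b, hb, hb0, hbc⟩ := 𝒢.exists_central_multiple w hw hcomm1 hdom1 hr hr0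
    have hS : r * b ∈ S := ⟨hb0, by simpa using Grd.mul_mem hr hb, hbc⟩
    have hu := hi.isUnit _ hS
    have hxi : Commute (i r) (i b) := by
      rw [commute_iff_eq, ← map_mul, ← map_mul, hcomm1 r hr b hb]
    rw [map_mul] at hu
    have hu' := (hxi.isUnit_mul_iff.mp hu).1
    rw [← hcx] at hu'
    exact ((show Commute (i c) x from hi.comm hc x).isUnit_mul_iff.mp hu').2
  have hdomD : ∀ P : Subgroup G, Group.IsSolvable P → ∀ x ∈ 𝒟.sub P, ∀ y ∈ 𝒟.sub P,
      x * y = 0 → x = 0 ∨ y = 0 := by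
    intro P hP x hx y hy hxy
    obtain ⟨c, hc, r, hr, hcx⟩ := hsub P x hx
    obtain ⟨e, he, s, hs, hey⟩ := hsub P y hy
    have h1 := hi.mul_eq he hcx hey
    rw [hi.eq_zero_iff (Submonoid.mul_mem S hc he) h1] at hxy
    rw [hi.eq_zero_iff hc hcx, hi.eq_zero_iff he hey]
    exact hdom P hP r hr s hs hxy
  have hunit : ∀ x : D, IsUnit x ∨ x = 0 := 𝒟.isUnit_of_sylow v hv hK fun p _ P =>
    hdomD P (by
      have := P.isPGroup'.isNilpotent
      infer_instance)
  let _ : DivisionRing D := DivisionRing.ofIsUnitOrEqZero hunit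
  have hcommD : ∀ x ∈ 𝒟.sub A, ∀ y ∈ 𝒟.sub A, x * y = y * x := by
    intro x hx y hy
    obtain ⟨c, hc, r, hr, hcx⟩ := hsub A x hx
    obtain ⟨e, he, s, hs, hey⟩ := hsub A y hy
    have h1 := hi.mul_eq he hcx hey
    have h2 := hi.mul_eq hc hey hcx
    rw [hcomm s hs r hr, ← h1, hc.2.2 e] at h2
    exact (hi.cancel (Submonoid.mul_mem S he hc) h2).symm
  have hne : ∀ g, 𝒟.comp g ≠ ⊥ := fun g =>
    (Submodule.ne_bot_iff _).mpr ⟨v g, hv g, (v g).ne_zero⟩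
  refine ⟨D, inferInstance, inferInstance, 𝒟, hne, ?_⟩
  have hle : ∀ g, ∀ x ∈ 𝒟.comp g,
      x ∈ (𝒟.coarsen (QuotientGroup.mk' A)).comp (QuotientGroup.mk' A g) := fun g x hx =>
    Grd.mem_coarsen.mpr fun h hne => Grd.pr_of_ne hx fun e => hne (by rw [e])
  have key := (𝒟.coarsen (QuotientGroup.mk' A)).finrank_center (fun q => by
    obtain ⟨g, rfl⟩ := QuotientGroup.mk'_surjective _ q
    exact (Submodule.ne_bot_iff _).mpr ⟨v g, hle g _ (hv g), (v g).ne_zero⟩) (fun q hq => by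
    obtain ⟨g, rfl⟩ := QuotientGroup.mk'_surjective _ q
    refine (QuotientGroup.eq_one_iff g).mpr (hact g fun y hy => hi.inj ?_)
    rw [map_mul, map_mul]
    refine hq (i (w g)) (hle g _ (hv g)) (i y) ⟨?_, fun t ht => ?_⟩
    · exact Grd.mem_coarsen_one.mpr (hsubi A y hy)
    · exact hcommD t (Grd.mem_coarsen_one.mp ht) _ (hsubi A y hy))
  rw [key]
  have htop : Subring.center (𝒟.coarsen (QuotientGroup.mk' A)).unitComp = ⊤ := by
    refine eq_top_iff.mpr fun x _ => Subring.mem_center_iff.mpr fun y => Subtype.ext ?_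
    exact hcommD y (Grd.mem_coarsen_one.mp y.2) x (Grd.mem_coarsen_one.mp x.2)
  have h1 : Module.finrank (Subring.center (𝒟.coarsen (QuotientGroup.mk' A)).unitComp)
      (𝒟.coarsen (QuotientGroup.mk' A)).unitComp = 1 := by
    refine (finrank_eq_one_iff_of_nonzero' 1 one_ne_zero).mpr fun x => ?_
    exact ⟨⟨x, htop ▸ Subring.mem_top x⟩, mul_one x⟩
  rw [h1, mul_one, Subgroup.index, Nat.card_eq_fintype_card]

/-! ### Gradings of group algebras, and conclusion -/

section GroupAlgebra

variable {𝕜 G Γ : Type} [Field 𝕜] [Group G] [Fintype G] [Group Γ]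

open Classical in
/-- The grading of the group algebra `𝕜[Γ]` induced by a homomorphism `π : Γ → G`. -/
noncomputable def Grd.ofHom (𝕜 : Type) [Field 𝕜] (π : Γ →* G) : Grd 𝕜 G (MonoidAlgebra 𝕜 Γ) where
  pr g :=
    { toFun := fun x => MonoidAlgebra.ofCoeff (x.coeff.filter fun a => π a = g)
      map_add' := fun x y => by
        rw [MonoidAlgebra.coeff_add, Finsupp.filter_add, MonoidAlgebra.ofCoeff_add]
      map_smul' := fun a x => by
        rw [MonoidAlgebra.coeff_smul, Finsupp.filter_smul, MonoidAlgebra.ofCoeff_smul,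
          RingHom.id_apply] }
  sum_pr x := by
    apply MonoidAlgebra.coeff_injective
    ext a
    simp [MonoidAlgebra.coeff_sum, Finsupp.filter_apply]
  pr_same g x := by
    apply MonoidAlgebra.coeff_injective
    ext a
    by_cases ha : π a = g <;> simp [ha]
  pr_ne g h x hgh := by
    apply MonoidAlgebra.coeff_injective
    ext a
    by_cases ha : π a = g
    · simp [ha, hgh]
    · simp [ha]
  pr_mul g h x y := by
    apply MonoidAlgebra.coeff_injective
    refine (Finsupp.filter_eq_self_iff _ _).mpr fun c hc => ?_
    rw [← Finsupp.mem_support_iff] at hc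
    obtain ⟨a, ha, b, hb, rfl⟩ := Finset.mem_mul.mp (MonoidAlgebra.support_coeff_mul_subset _ _ hc)
    have ha' : π a = g := by
      by_contra hne
      exact Finsupp.mem_support_iff.mp ha (Finsupp.filter_apply_neg _ _ hne)
    have hb' : π b = h := by
      by_contra hne
      exact Finsupp.mem_support_iff.mp hb (Finsupp.filter_apply_neg _ _ hne)
    rw [map_mul, ha', hb']

theorem Grd.single_mem_ofHom (π : Γ →* G) (a : Γ) :
    MonoidAlgebra.single a (1 : 𝕜) ∈ (Grd.ofHom 𝕜 π).comp (π a) := by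
  classical
  rw [Grd.mem_comp]
  exact congrArg MonoidAlgebra.ofCoeff
    (Finsupp.filter_single_of_pos (fun b => π b = π a) (a := a) (b := (1 : 𝕜)) rfl)

/-- The part of the group algebra graded by a subgroup `P` lies in the group algebra of the preimage
of `P`. -/
theorem Grd.exists_of_mem_sub_ofHom {π : Γ →* G} {P : Subgroup G} {x : MonoidAlgebra 𝕜 Γ}
    (hx : x ∈ (Grd.ofHom 𝕜 π).sub P) :
    ∃ y, MonoidAlgebra.mapDomainRingHom 𝕜 (P.comap π).subtype y = x := by
  classical
  refine ⟨MonoidAlgebra.comapDomain _ (Subgroup.subtype_injective _) x,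
    MonoidAlgebra.mapDomain_comapDomain (fun a ha => ?_) _⟩
  by_contra hmem
  have hP : π a ∉ P := fun h => hmem ⟨⟨a, h⟩, rfl⟩
  have h0 := congrArg (fun z : MonoidAlgebra 𝕜 Γ => z.coeff a) (Grd.mem_sub.mp hx (π a) hP)
  have h1 : ((Grd.ofHom 𝕜 π).pr (π a) x).coeff a = x.coeff a :=
    Finsupp.filter_apply_pos _ _ rfl
  exact Finsupp.mem_support_iff.mp ha (h1.symm.trans h0)

theorem MonoidAlgebra.mul_comm_of_comm {M : Type} [Group M] (hM : ∀ a b : M, a * b = b * a)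
    (x y : MonoidAlgebra 𝕜 M) : x * y = y * x := by
  induction x using MonoidAlgebra.induction_linear with
  | zero => simp
  | add x x' hx hx' => rw [add_mul, mul_add, hx, hx']
  | single a r =>
    induction y using MonoidAlgebra.induction_linear with
    | zero => simp
    | add y y' hy hy' => rw [add_mul, mul_add, hy, hy']
    | single b s => rw [MonoidAlgebra.single_mul_single, MonoidAlgebra.single_mul_single,
        hM, mul_comm r]

/-- The case in which the degree equals the index of `A`; the division ring is a central localization
of the group algebra of the group of `exists_extension`. -/
theorem exists_divisionRing_index (𝕜 G : Type) [Field 𝕜] [Group G] [Fintype G] (A : Subgroup G)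
    [A.Normal] (hA : ∀ a b : A, a * b = b * a) :
    ∃ (D : Type) (_ : DivisionRing D) (_ : Algebra 𝕜 D) (𝒟 : Grd 𝕜 G D),
      (∀ g, 𝒟.comp g ≠ ⊥) ∧ Module.finrank (Subring.center D) D = A.index ^ 2 := by
  obtain ⟨Γ, _, π, hπ, hab, hcen, hup⟩ := exists_extension A hA
  choose s hs using hπ
  let w : G → (MonoidAlgebra 𝕜 Γ)ˣ := fun g =>
    Units.map (MonoidAlgebra.of 𝕜 Γ) (toUnits (s g))
  have hwv : ∀ g, (w g : MonoidAlgebra 𝕜 Γ) = MonoidAlgebra.single (s g) 1 := fun g => rfl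
  refine (Grd.ofHom 𝕜 π).exists_divisionRing w (fun g => ?_) A ?_ ?_ ?_
  · have := Grd.single_mem_ofHom (𝕜 := 𝕜) π (s g)
    rwa [hs] at this
  · intro x hx y hy
    obtain ⟨x, rfl⟩ := Grd.exists_of_mem_sub_ofHom hx
    obtain ⟨y, rfl⟩ := Grd.exists_of_mem_sub_ofHom hy
    rw [← map_mul, ← map_mul, MonoidAlgebra.mul_comm_of_comm fun a b =>
      Subtype.ext (hab a b a.2 b.2)]
  · intro g hg
    rw [← hs g]
    refine hcen _ fun y hy => ?_
    have h := hg (MonoidAlgebra.single y 1)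
      (Grd.comp_le_sub hy (Grd.single_mem_ofHom π y))
    rw [hwv, MonoidAlgebra.single_mul_single, MonoidAlgebra.single_mul_single] at h
    exact MonoidAlgebra.of_injective (R := 𝕜) (by simpa using h)
  · intro P hP x hx y hy hxy
    obtain ⟨x, rfl⟩ := Grd.exists_of_mem_sub_ofHom hx
    obtain ⟨y, rfl⟩ := Grd.exists_of_mem_sub_ofHom hy
    have := hup P hP
    have hinj : Function.Injective (MonoidAlgebra.mapDomainRingHom 𝕜 (P.comap π).subtype) :=
      MonoidAlgebra.mapDomain_injective (Subgroup.subtype_injective _)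
    rw [← map_mul, map_eq_zero_iff _ hinj, mul_eq_zero] at hxy
    rwa [map_eq_zero_iff _ hinj, map_eq_zero_iff _ hinj]

end GroupAlgebra

/-- A finite group `G` faithfully grades a division algebra of degree `d` over its
center containing the algebraically closed field `𝕜` of characteristic zero
iff `G` has a normal abelian subgroup of index dividing `d`.
A faithful grading is a direct sum decomposition `D = ⊕_{g ∈ G} D_g` into `𝕜`-subspaces
(expressed as: the family is independent and spans `D`) with `D_g ≠ 0` and
`D_g · D_h = D_{gh}` (product of submodules = span of products). -/
theorem faithful_grading_iff_normal_abelian_subgroup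
    (𝕜 : Type) [Field 𝕜] [IsAlgClosed 𝕜] [CharZero 𝕜]
    (G : Type) [Group G] [Finite G] (d : ℕ) (hd : 1 ≤ d) :
    (∃ (D : Type) (_ : DivisionRing D) (_ : Algebra 𝕜 D)
        (Dg : G → Submodule 𝕜 D),
      iSupIndep Dg ∧ (⨆ g : G, Dg g) = ⊤ ∧ (∀ g : G, Dg g ≠ ⊥) ∧
      (∀ g h : G, Dg g * Dg h = Dg (g * h)) ∧
      Module.finrank (Subring.center D) D = d ^ 2) ↔
    ∃ A : Subgroup G, A.Normal ∧ (∀ a b : A, a * b = b * a) ∧ A.index ∣ d := by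
  classical
  let _ := Fintype.ofFinite G
  constructor
  · rintro ⟨D, _, _, Dg, hi, ht, hne, hm, hfr⟩
    obtain ⟨𝒢, h𝒢⟩ := Grd.exists_of_submodules Dg hi ht
      (fun g h x y hx hy => (hm g h) ▸ Submodule.mul_mem_mul hx hy)
    exact 𝒢.exists_normal_abelian (fun g => by rw [h𝒢]; exact hne g) hd hfr
  · rintro ⟨A, hA, hab, m, rfl⟩
    have hm : NeZero m := ⟨by rintro rfl; simp at hd⟩
    -- adjoin a central cyclic factor of order `m` to raise the index from `A.index` to `d`,
    -- and forget the corresponding part of the degree at the end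
    let B : Subgroup (G × Multiplicative (ZMod m)) := A.prod ⊥
    have hBidx : B.index = A.index * m := by
      rw [Subgroup.index_prod, Subgroup.index_bot]
      simp
    obtain ⟨D, _, _, 𝒟, hne, hfr⟩ := exists_divisionRing_index 𝕜 (G × Multiplicative (ZMod m)) B
      (by
        rintro ⟨⟨a, z⟩, ha, hz⟩ ⟨⟨b, z'⟩, hb, hz'⟩
        refine Subtype.ext (Prod.ext ?_ (mul_comm _ _))
        exact congrArg Subtype.val (hab ⟨a, ha⟩ ⟨b, hb⟩))
    let 𝒢 := 𝒟.coarsen (MonoidHom.fst G (Multiplicative (ZMod m)))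
    have hex : ∀ g, ∃ x ∈ 𝒢.comp g, x ≠ 0 := fun g => by
      obtain ⟨x, hx, hx0⟩ := Submodule.exists_mem_ne_zero_of_ne_bot (hne (g, 1))
      exact ⟨x, Grd.mem_coarsen.mpr fun h hh => Grd.pr_of_ne hx fun e => hh (by rw [e]; rfl), hx0⟩
    refine ⟨D, inferInstance, inferInstance, 𝒢.comp, 𝒢.iSupIndep_comp, 𝒢.iSup_comp,
      fun g => (Submodule.ne_bot_iff _).mpr (hex g), fun g h => le_antisymm ?_ fun x hx => ?_, ?_⟩
    · exact Submodule.mul_le.mpr fun x hx y hy => Grd.mul_mem hx hy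
    · -- a nonzero element `u` of degree `g` is invertible, so `x = u * (u⁻¹ * x)`
      obtain ⟨u, hu, hu0⟩ := hex g
      have h1 := Submodule.mul_mem_mul hu (Grd.mul_mem (Grd.inv_mem hu) hx)
      rwa [inv_mul_cancel_left, mul_inv_cancel_left₀ hu0] at h1
    · rw [hfr, hBidx]
end

section
/- Let 𝕜 be an algebraically closed field of characteristic zero and let D be a division ring which is a 𝕜-algebra of degree d over its center Z(D) (i.e. dim_{Z(D)} D = d²). Suppose D is faithfully graded by a finite group G and that the identity component D₁ is contained in the center Z(D). Then G is abelian. -/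
/-!
Let `Γ` be the group of units of `D` that become homogeneous after multiplication by a nonzero
central element. Two units of `Γ` of the same degree differ by a central factor, because `D₁` is
central; hence `Γ` is, modulo its center, covered by finitely many representatives, one for each
element of `G`, and it has only finitely many commutators. By Schur's theorem the
commutator subgroup of `Γ` is finite, so every commutator in `Γ` has finite order. An element of
finite order in a division algebra over the algebraically closed field `𝕜` is integral over `𝕜`,
hence a scalar. So nonzero `x ∈ D_g` and `y ∈ D_h` satisfy `x y = a y x` with `a ∈ 𝕜`, and
`x y` is a nonzero element of `D_{gh} ∩ D_{hg}`, which forces `g h = h g`.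
-/

open scoped commutatorElement

/-- A commutator is unchanged when its entries are multiplied by central elements, so finitely
many representatives modulo the center yield finitely many commutators. -/
theorem finite_commutatorSet_of_reps {Γ ι : Type*} [Group Γ] [Finite ι] (rep : ι → Γ)
    (h : ∀ u : Γ, ∃ i, ∃ c ∈ Subgroup.center Γ, u = c * rep i) :
    Finite (commutatorSet Γ) := by
  have hsub : commutatorSet Γ ⊆ Set.range (fun p : ι × ι => ⁅rep p.1, rep p.2⁆) := by
    rintro _ ⟨u, v, rfl⟩
    obtain ⟨i, c, hc, rfl⟩ := h u
    obtain ⟨j, e, he, rfl⟩ := h v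
    refine ⟨(i, j), ?_⟩
    rw [Subgroup.mem_center_iff] at hc he
    have h1 : ∀ x y : Γ, ⁅c * x, y⁆ = ⁅x, y⁆ := fun x y => by
      rw [commutatorElement_def, commutatorElement_def, mul_inv_rev, mul_assoc c, mul_assoc c,
        ← hc]
      group
    have h2 : ∀ x y : Γ, ⁅x, e * y⁆ = ⁅x, y⁆ := fun x y => by
      rw [commutatorElement_def, commutatorElement_def, ← mul_assoc x, he x, mul_inv_rev,
        mul_assoc e, mul_assoc e, mul_assoc e, ← he]
      group
    simp only [h1, h2]
  exact ((Set.finite_range _).subset hsub).to_subtype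

theorem exists_algebraMap_eq_of_isIntegral {k D : Type*} [Field k] [IsAlgClosed k]
    [DivisionRing D] [Algebra k D] (x : D) (hx : IsIntegral k x) :
    ∃ a : k, algebraMap k D a = x := by
  refine ⟨-(minpoly k x).coeff 0, ?_⟩
  have hq : (minpoly k x).leadingCoeff = 1 := minpoly.monic hx
  have h : (minpoly k x).degree = 1 :=
    IsAlgClosed.degree_eq_one_of_irreducible k (minpoly.irreducible hx)
  have h0 : Polynomial.aeval x (minpoly k x) = 0 := minpoly.aeval k x
  rw [Polynomial.eq_X_add_C_of_degree_eq_one h, hq, Polynomial.C_1, one_mul, map_add,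
    Polynomial.aeval_X, Polynomial.aeval_C, add_eq_zero_iff_eq_neg] at h0
  rw [map_neg, ← h0]

theorem exists_algebraMap_eq_of_isOfFinOrder {k D : Type*} [Field k] [IsAlgClosed k]
    [DivisionRing D] [Algebra k D] (x : D) (hx : IsOfFinOrder x) :
    ∃ a : k, algebraMap k D a = x := by
  obtain ⟨n, hn, hxn⟩ := isOfFinOrder_iff_pow_eq_one.mp hx
  refine exists_algebraMap_eq_of_isIntegral x (IsIntegral.of_pow hn ?_)
  rw [hxn]
  exact isIntegral_one

/-- The units `u` of `D` such that `z * u` is homogeneous for some nonzero central `z`. Allowing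
the factor `z` makes closure under inverses immediate: a product in `D₁` is central, and its
inverse is again central. -/
def homogeneousUnits {k D G : Type*} [Field k] [DivisionRing D] [Algebra k D] [Group G]
    (Dg : G → Submodule k D) (hne : ∀ g : G, Dg g ≠ ⊥)
    (hmul : ∀ g h : G, Dg g * Dg h = Dg (g * h))
    (hcentral : (Dg 1 : Set D) ⊆ (Subring.center D : Set D)) : Subgroup Dˣ where
  carrier := {u | ∃ g, ∃ z ∈ Subring.center D, z ≠ 0 ∧ z * (u : D) ∈ Dg g}
  one_mem' := by
    obtain ⟨w, hw, hw0⟩ := Submodule.exists_mem_ne_zero_of_ne_bot (hne 1)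
    exact ⟨1, w, hcentral hw, hw0, by simpa using hw⟩
  mul_mem' := by
    rintro u v ⟨g, z, hz, hz0, hu⟩ ⟨h, w, hw, hw0, hv⟩
    refine ⟨g * h, z * w, mul_mem hz hw, mul_ne_zero hz0 hw0, ?_⟩
    have := Submodule.mul_mem_mul hu hv
    rw [hmul] at this
    convert this using 1
    rw [Units.val_mul, mul_assoc, mul_assoc, ← mul_assoc w, ← Subring.mem_center_iff.mp hw u,
      mul_assoc]
  inv_mem' := by
    rintro u ⟨g, z, hz, hz0, hu⟩
    obtain ⟨v, hv, hv0⟩ := Submodule.exists_mem_ne_zero_of_ne_bot (hne g⁻¹)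
    have ht := Submodule.mul_mem_mul hv hu
    rw [hmul, inv_mul_cancel] at ht
    have htc := hcentral ht
    refine ⟨g⁻¹, z⁻¹ * (v * (z * u)), mul_mem (Set.inv_mem_center hz) htc,
      mul_ne_zero (inv_ne_zero hz0) (mul_ne_zero hv0 (mul_ne_zero hz0 u.ne_zero)), ?_⟩
    convert hv using 1
    rw [← mul_assoc v, Subring.mem_center_iff.mp hz v]
    simp [mul_assoc, hz0]

/-- If a division algebra `D` of degree `d` over its center, containing an
algebraically closed field `𝕜` of characteristic zero, is faithfully graded by a
finite group `G` and the identity component `D₁` is central, then `G` is abelian. -/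
theorem abelian_of_central_identity_component
    (𝕜 : Type) [Field 𝕜] [IsAlgClosed 𝕜] [CharZero 𝕜]
    (D : Type) [DivisionRing D] [Algebra 𝕜 D]
    (G : Type) [Group G] [Finite G]
    (d : ℕ) (hd : 1 ≤ d)
    (hdeg : Module.finrank (Subring.center D) D = d ^ 2)
    (Dg : G → Submodule 𝕜 D)
    (hindep : iSupIndep Dg) (hsup : (⨆ g : G, Dg g) = ⊤)
    (hne : ∀ g : G, Dg g ≠ ⊥)
    (hmul : ∀ g h : G, Dg g * Dg h = Dg (g * h))
    (hcentral : (Dg 1 : Set D) ⊆ (Subring.center D : Set D)) :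
    ∀ g h : G, g * h = h * g := by
  intro g h
  choose x hx hx0 using fun g => Submodule.exists_mem_ne_zero_of_ne_bot (hne g)
  let Γ := homogeneousUnits Dg hne hmul hcentral
  have hmem : ∀ g, Units.mk0 (x g) (hx0 g) ∈ Γ := fun g =>
    ⟨g, 1, one_mem _, one_ne_zero, by simpa using hx g⟩
  let rep : G → Γ := fun g => ⟨Units.mk0 (x g) (hx0 g), hmem g⟩
  have hrep : ∀ u : Γ, ∃ i, ∃ c ∈ Subgroup.center Γ, u = c * rep i := by
    rintro ⟨u, g, z, hz, hz0, hu⟩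
    -- With `v` of degree `g⁻¹`, both `t = v * (z * u)` and `s = v * x g` lie in `D₁`, so they
    -- are central, and cancelling `v` in `v * (s * (z * u)) = v * (t * x g)` compares `u`
    -- with `x g`.
    have hv := hx g⁻¹
    have hv0 := hx0 g⁻¹
    set v := x g⁻¹
    have ht := Submodule.mul_mem_mul hv hu
    have hs := Submodule.mul_mem_mul hv (hx g)
    rw [hmul, inv_mul_cancel] at ht hs
    have htc := hcentral ht
    have hsc := hcentral hs
    have hs0 := mul_ne_zero hv0 (hx0 g)
    have ht0 := mul_ne_zero hv0 (mul_ne_zero hz0 u.ne_zero)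
    generalize htd : v * (z * (u : D)) = t at *
    generalize hsd : v * x g = s at *
    have key : s * (z * u) = t * x g := by
      apply mul_left_cancel₀ hv0
      rw [← mul_assoc, Subring.mem_center_iff.mp hsc v, mul_assoc, htd, ← mul_assoc,
        Subring.mem_center_iff.mp htc v, mul_assoc, hsd, Subring.mem_center_iff.mp htc s]
    refine ⟨g, ⟨u, g, z, hz, hz0, hu⟩ * (rep g)⁻¹, ?_, by simp⟩
    have hc : (u : D) * (x g)⁻¹ = (s * z)⁻¹ * t := by
      rw [mul_inv_eq_iff_eq_mul₀ (hx0 g), mul_assoc, ← key, ← mul_assoc s,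
        inv_mul_cancel_left₀ (mul_ne_zero hs0 hz0)]
    have hcc : (u : D) * (x g)⁻¹ ∈ Subring.center D := by
      rw [hc]
      exact mul_mem (Set.inv_mem_center (mul_mem hsc hz)) htc
    rw [Subgroup.mem_center_iff]
    intro w
    apply Subtype.ext
    apply Units.ext
    simpa [rep] using Subring.mem_center_iff.mp hcc (w : Dˣ)
  have hfin : Finite (commutatorSet Γ) := finite_commutatorSet_of_reps rep hrep
  have hcomm : ⁅rep g, rep h⁆ ∈ commutator Γ :=
    Subgroup.commutator_mem_commutator (Subgroup.mem_top _) (Subgroup.mem_top _)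
  have hord : IsOfFinOrder ⁅rep g, rep h⁆ :=
    (Subgroup.subtype _).isOfFinOrder (isOfFinOrder_of_finite (⟨_, hcomm⟩ : commutator Γ))
  have hordD := ((Units.coeHom D).comp Γ.subtype).isOfFinOrder hord
  obtain ⟨a, ha⟩ := exists_algebraMap_eq_of_isOfFinOrder (k := 𝕜) _ hordD
  have ha' : algebraMap 𝕜 D a = x g * x h * (x g)⁻¹ * (x h)⁻¹ := by
    rw [ha]
    simp [rep, commutatorElement_def]
  have hxy : x g * x h = a • (x h * x g) := by
    rw [Algebra.smul_def, ha']
    simp [mul_assoc, hx0]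
  have h1 := Submodule.mul_mem_mul (hx g) (hx h)
  have h2 := Submodule.smul_mem _ a (Submodule.mul_mem_mul (hx h) (hx g))
  rw [← hxy] at h2
  rw [hmul] at h1 h2
  by_contra hgh
  exact mul_ne_zero (hx0 g) (hx0 h)
    (Submodule.disjoint_def.mp (hindep.pairwiseDisjoint hgh) _ h1 h2)
end

section
/- Let 𝕜 be an algebraically closed field of characteristic zero and let D be a division ring which is a 𝕜-algebra of degree d over its center Z(D) (i.e. dim_{Z(D)} D = d²). If D is faithfully graded by a finite group G, then G has a normal abelian subgroup whose index divides d. -/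
/-!
Write `C` for the centralizer of the identity component `D_1`, and `Z(-)` for centers. Nonzero
homogeneous elements are invertible with homogeneous inverse, so `G` acts on the field `Z(C)` by
conjugation with homogeneous elements; the action is well defined because elements of `D_1` commute
with `C`. The subgroup sought is the kernel `N` of this action.

*Index.* The fixed field of the action is `Z(D)`, so `[G : N] = [Z(C) : Z(D)]` by Artin's theorem
(`index_action_ker`), and the degree over `Z(D)` of any subfield of `D` divides `d`
(`finrank_subfield_dvd`).

*Commutativity.* `D_1` is finite-dimensional over its center (`finite_base`), and `Z(D_1) ⊆ Z(C)`.
An element of `D_g` with `g ∈ N` acts on `D_1` by an automorphism fixing `Z(D_1)`, so by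
Skolem–Noether `D_g` contains a nonzero element of `C` (`exists_mem_cent`). The group of nonzero
homogeneous elements of `C` has a center of finite index, so its commutators have finite order by
the transfer. As `𝕜` is algebraically closed, an element of finite order in `D` lies in `𝕜`, which
is contained in `D_1`; thus the degrees of the two elements commute (`deg_comm`).

Both Skolem–Noether and the count of subfield degrees rest on the description of linear
endomorphisms of a central division algebra as operators `x ↦ ∑ aᵢ x bᵢ`
(`eq_zero_of_sum_mul_mul_eq_zero`, `exists_eq_sum_mul_mul`).
-/

/-! ### Division algebras finite over their center -/

/-- If the `b i` are independent over the center `F` of `E`, the operator `x ↦ ∑ aᵢ x bᵢ` determines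
the coefficients `aᵢ`. A shortest nontrivial relation, normalized to have a coefficient `1`, has all
its coefficients central, so its value at `x = 1` contradicts independence. -/
theorem eq_zero_of_sum_mul_mul_eq_zero {F E ι : Type*} [Field F] [DivisionRing E] [Algebra F E]
    (hc : ∀ a : E, (∀ y, a * y = y * a) → ∃ k : F, algebraMap F E k = a)
    {b : ι → E} (hb : LinearIndependent F b) (s : Finset ι) :
    ∀ a : ι → E, (∀ x, ∑ i ∈ s, a i * x * b i = 0) → ∀ i ∈ s, a i = 0 := by
  classical
  induction s using Finset.induction_on with
  | empty => simp
  | insert j s hj ih =>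
    intro a h
    simp only [Finset.sum_insert hj] at h
    by_cases haj : a j = 0
    · simp only [haj, zero_mul, zero_add] at h
      intro i hi
      rcases Finset.mem_insert.1 hi with rfl | hi
      · exact haj
      · exact ih a h i hi
    exfalso
    -- Normalize the coefficient at `j` to be `1`.
    have h1 : ∀ x, x * b j + ∑ i ∈ s, ((a j)⁻¹ * a i) * x * b i = 0 := by
      intro x
      have := congrArg (fun t => (a j)⁻¹ * t) (h x)
      simpa [mul_add, Finset.mul_sum, ← mul_assoc, haj] using this
    -- Comparing the relation at `y * x` with `y` times the relation at `x` cancels the term at `j`.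
    have h2 : ∀ y, ∀ i ∈ s, ((a j)⁻¹ * a i) * y - y * ((a j)⁻¹ * a i) = 0 := by
      intro y
      refine ih (fun i => ((a j)⁻¹ * a i) * y - y * ((a j)⁻¹ * a i)) fun x => ?_
      have e1 := h1 (y * x)
      have e2 := congrArg (fun t => y * t) (h1 x)
      simp only [mul_add, mul_zero, Finset.mul_sum] at e2
      simp only [sub_mul, Finset.sum_sub_distrib]
      simp only [mul_assoc] at e1 e2 ⊢
      exact sub_eq_zero.2 (add_left_cancel (e1.trans e2.symm))
    have h3 : ∀ i ∈ s, ∃ k : F, algebraMap F E k = (a j)⁻¹ * a i := fun i hi =>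
      hc _ fun y => sub_eq_zero.1 (h2 y i hi)
    choose! k hk using h3
    have h4 := h1 1
    have h5 : ∑ i ∈ insert j s, (if i = j then (1 : F) else k i) • b i = 0 := by
      rw [Finset.sum_insert hj, ← h4]
      simp only [if_true, one_smul, one_mul, mul_one]
      congr 1
      refine Finset.sum_congr rfl fun i hi => ?_
      rw [if_neg (fun e : i = j => hj (e ▸ hi)), Algebra.smul_def, hk i hi]
    have := linearIndependent_iff'.1 hb _ _ h5 j (Finset.mem_insert_self _ _)
    simp at this

/-- Every `F`-linear endomorphism of a division algebra `E` finite over its center `F` has the form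
`x ↦ ∑ aᵢ x bᵢ`: by the uniqueness of the coefficients this is a dimension count. -/
theorem exists_eq_sum_mul_mul {F E ι : Type*} [Field F] [DivisionRing E] [Algebra F E] [Fintype ι]
    (hc : ∀ a : E, (∀ y, a * y = y * a) → ∃ k : F, algebraMap F E k = a)
    (b : Module.Basis ι F E) (f : E →ₗ[F] E) :
    ∃ a : ι → E, ∀ x, f x = ∑ i, a i * x * b i := by
  classical
  have : Module.Finite F E := Module.Finite.of_basis b
  let T : (ι → E) →ₗ[F] (E →ₗ[F] E) :=
    { toFun := fun a => ∑ i, LinearMap.mulLeftRight F (a i, b i)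
      map_add' := fun a a' => by
        ext x; simp [add_mul, Finset.sum_add_distrib]
      map_smul' := fun c a => by
        ext x; simp [Finset.smul_sum] }
  have hT : ∀ a x, T a x = ∑ i, a i * x * b i := fun a x => by simp [T]
  have hinj : Function.Injective T := by
    rw [injective_iff_map_eq_zero]
    intro a ha
    funext i
    exact eq_zero_of_sum_mul_mul_eq_zero hc b.linearIndependent Finset.univ a
      (fun x => by rw [← hT, ha]; rfl) i (Finset.mem_univ _)
  have hfr : Module.finrank F (ι → E) = Module.finrank F (E →ₗ[F] E) := by
    rw [Module.finrank_linearMap, Module.finrank_pi_fintype]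
    simp [Module.finrank_eq_card_basis b]
  obtain ⟨a, ha⟩ := (LinearMap.injective_iff_surjective_of_finrank_eq_finrank hfr).1 hinj f
  exact ⟨a, fun x => by rw [← ha, hT]⟩

/-- Skolem–Noether for a division algebra `E` finite over its center `F`: an `F`-algebra endomorphism
is inner. Any nonzero coefficient of `φ` written as `x ↦ ∑ aᵢ x bᵢ` conjugates. -/
theorem exists_mul_eq_algHom_mul {F E : Type*} [Field F] [DivisionRing E] [Algebra F E] [Module.Finite F E]
    (hc : ∀ a : E, (∀ y, a * y = y * a) → ∃ k : F, algebraMap F E k = a)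
    (φ : E →ₐ[F] E) : ∃ a : E, a ≠ 0 ∧ ∀ x, a * x = φ x * a := by
  let b := Module.finBasis F E
  obtain ⟨a, ha⟩ := exists_eq_sum_mul_mul hc b φ.toLinearMap
  simp only [AlgHom.toLinearMap_apply] at ha
  have h : ∀ x i, a i * x - φ x * a i = 0 := fun x i => by
    refine eq_zero_of_sum_mul_mul_eq_zero hc b.linearIndependent Finset.univ (fun i => a i * x - φ x * a i)
      (fun y => ?_) i (Finset.mem_univ _)
    have e := ha (x * y)
    rw [map_mul, ha y, Finset.mul_sum] at e
    simp only [sub_mul, Finset.sum_sub_distrib, sub_eq_zero]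
    simpa [mul_assoc] using e.symm
  have : ∃ i, a i ≠ 0 := by
    by_contra! h0
    have := ha 1
    simp [h0] at this
  obtain ⟨i, hi⟩ := this
  exact ⟨a i, hi, fun x => sub_eq_zero.1 (h x i)⟩

/-- A self-centralizing subfield of a division algebra of degree `d` has dimension `d` over the center.
The endomorphisms of `D` as a left `M`-space are the operators `x ↦ ∑ aᵢ x bᵢ` with `aᵢ ∈ M`, so
`d² = (dim_M D)²`. -/
theorem finrank_of_self_centralizing {F D M : Type*} [Field F] [DivisionRing D] [Algebra F D]
    [Module.Finite F D] [Field M] [Algebra F M]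
    (hc : ∀ a : D, (∀ y, a * y = y * a) → ∃ k : F, algebraMap F D k = a)
    (f : M →ₐ[F] D) (hf : ∀ x, (∀ m, x * f m = f m * x) → ∃ m, f m = x)
    {d : ℕ} (hd : 1 ≤ d) (hdeg : Module.finrank F D = d ^ 2) : Module.finrank F M = d := by
  classical
  let : Module M D := Module.compHom D f.toRingHom
  have hsm : ∀ (m : M) (x : D), m • x = f m * x := fun _ _ => rfl
  have : IsScalarTower F M D := ⟨fun a m x => by
    rw [hsm, hsm, map_smul, smul_mul_assoc]⟩
  have : Module.Finite M D := Module.Finite.of_restrictScalars_finite F M D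
  let b := Module.finBasis F D
  let T : (Fin (Module.finrank F D) → M) →ₗ[M] (D →ₗ[M] D) :=
    { toFun := fun a =>
        { toFun := fun x => ∑ i, f (a i) * x * b i
          map_add' := fun x y => by simp [mul_add, add_mul, Finset.sum_add_distrib]
          map_smul' := fun m x => by
            simp only [hsm, RingHom.id_apply, Finset.mul_sum, ← mul_assoc, ← map_mul]
            simp only [mul_comm m] }
      map_add' := fun a a' => by
        ext x; simp [add_mul, Finset.sum_add_distrib]
      map_smul' := fun c a => by
        ext x; simp [Finset.mul_sum, mul_assoc, hsm] }
  have hT : ∀ a x, T a x = ∑ i, f (a i) * x * b i := fun a x => rfl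
  have hinj : Function.Injective T := by
    rw [injective_iff_map_eq_zero]
    intro a ha
    funext i
    apply f.injective
    rw [Pi.zero_apply, map_zero]
    exact eq_zero_of_sum_mul_mul_eq_zero hc b.linearIndependent Finset.univ (fun i => f (a i))
      (fun x => by rw [← hT, ha]; rfl) i (Finset.mem_univ _)
  have hsurj : Function.Surjective T := by
    intro g
    obtain ⟨a, ha⟩ := exists_eq_sum_mul_mul hc b (g.restrictScalars F)
    simp only [LinearMap.coe_restrictScalars] at ha
    have h : ∀ i, ∃ m, f m = a i := fun i => hf _ fun m => by
      refine sub_eq_zero.1 <| eq_zero_of_sum_mul_mul_eq_zero hc b.linearIndependent Finset.univ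
        (fun i => a i * f m - f m * a i) (fun y => ?_) i (Finset.mem_univ _)
      have e := ha (m • y)
      rw [map_smul, ha y, hsm, hsm, Finset.mul_sum] at e
      simp only [sub_mul, Finset.sum_sub_distrib, sub_eq_zero]
      simpa [mul_assoc] using e.symm
    choose m hm using h
    refine ⟨m, LinearMap.ext fun x => ?_⟩
    rw [hT, ha]
    simp only [hm]
  have h1 := (LinearEquiv.ofBijective T ⟨hinj, hsurj⟩).finrank_eq
  rw [Module.finrank_linearMap, Module.finrank_fin_fun, hdeg, ← sq] at h1
  have h2 : Module.finrank M D = d := (Nat.pow_left_injective (n := 2) (by norm_num) h1).symm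
  have h3 := Module.finrank_mul_finrank F M D
  rw [h2, hdeg, sq] at h3
  exact Nat.eq_of_mul_eq_mul_right hd h3

/-- The degree over the center of any subfield of a division algebra of degree `d` divides `d`: extend
the subfield to a maximal commutative subalgebra, which is a self-centralizing field. -/
theorem finrank_subfield_dvd {F D L : Type*} [Field F] [DivisionRing D] [Algebra F D]
    [Module.Finite F D] [Field L] [Algebra F L]
    (hc : ∀ a : D, (∀ y, a * y = y * a) → ∃ k : F, algebraMap F D k = a)
    (f : L →ₐ[F] D) {d : ℕ} (hd : 1 ≤ d) (hdeg : Module.finrank F D = d ^ 2) :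
    Module.finrank F L ∣ d := by
  classical
  let S : Set ℕ := {n | ∃ A : Subalgebra F D, f.range ≤ A ∧ (∀ x ∈ A, ∀ y ∈ A, x * y = y * x) ∧
    Module.finrank F A = n}
  have hS : S.Nonempty := ⟨_, f.range, le_rfl, by
    rintro _ ⟨x, rfl⟩ _ ⟨y, rfl⟩
    change f x * f y = f y * f x
    rw [← map_mul, mul_comm, map_mul], rfl⟩
  have hB : BddAbove S := ⟨Module.finrank F D, by
    rintro _ ⟨A, -, -, rfl⟩
    exact Submodule.finrank_le A.toSubmodule⟩
  obtain ⟨A, hLA, hcomm, hA⟩ := Nat.sSup_mem hS hB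
  have hmax : ∀ x, (∀ y ∈ A, x * y = y * x) → x ∈ A := by
    intro x hx
    let A' := Algebra.adjoin F ((A : Set D) ∪ {x})
    have hAA' : A ≤ A' := fun y hy => Algebra.subset_adjoin (Or.inl hy)
    have hxA' : x ∈ A' := Algebra.subset_adjoin (Or.inr rfl)
    have hA'c : ∀ x ∈ A', ∀ y ∈ A', x * y = y * x := by
      have : ∀ a ∈ ((A : Set D) ∪ {x}), ∀ b ∈ ((A : Set D) ∪ {x}), a * b = b * a := by
        rintro a (ha | rfl) b (hb | rfl)
        · exact hcomm a ha b hb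
        · exact (hx a ha).symm
        · exact hx b hb
        · rfl
      intro x hx y hy
      exact congrArg Subtype.val
        ((Algebra.isMulCommutative_adjoin F this).is_comm.comm ⟨x, hx⟩ ⟨y, hy⟩)
    have hle : Module.finrank F A' ≤ Module.finrank F A := by
      rw [hA]
      exact le_csSup hB ⟨A', hLA.trans hAA', hA'c, rfl⟩
    rw [Subalgebra.eq_of_le_of_finrank_le hAA' hle]
    exact hxA'
  have hfield : IsField A :=
    { exists_pair_ne := ⟨0, 1, zero_ne_one⟩
      mul_comm := fun x y => Subtype.ext (hcomm x x.2 y y.2)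
      mul_inv_cancel := fun {x} hx => by
        have hx' : (x : D) ≠ 0 := fun h => hx (Subtype.ext h)
        refine ⟨⟨(x : D)⁻¹, hmax _ fun y hy => ?_⟩, Subtype.ext (mul_inv_cancel₀ hx')⟩
        exact ((Commute.inv_left_iff₀).2 (hcomm x x.2 y hy)).eq }
  let := hfield.toField
  have hM : Module.finrank F A = d := by
    refine finrank_of_self_centralizing hc A.val (fun x hx => ?_) hd hdeg
    exact ⟨⟨x, hmax x fun y hy => hx ⟨y, hy⟩⟩, rfl⟩
  let j : L →ₐ[F] A := f.codRestrict A fun x => hLA ⟨x, rfl⟩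
  let : Algebra L A := j.toRingHom.toAlgebra
  have : IsScalarTower F L A := IsScalarTower.of_algebraMap_eq fun x => (j.commutes x).symm
  exact ⟨_, by rw [← hM, Module.finrank_mul_finrank F L A]⟩
/-! ### Homogeneous elements and the centralizer of the identity component -/

/-- `Dg` is a grading of the division ring `D` by `G` with nonzero components, and `p g` is the
projection onto the component of degree `g`. -/
structure IsDivisionGrading {𝕜 D G : Type*} [Field 𝕜] [DivisionRing D] [Algebra 𝕜 D] [Group G]
    [Fintype G] (Dg : G → Submodule 𝕜 D) (p : G → D →ₗ[𝕜] D) : Prop where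
  proj_mem : ∀ g x, p g x ∈ Dg g
  sum_proj : ∀ x, ∑ g, p g x = x
  proj_self : ∀ g, ∀ x ∈ Dg g, p g x = x
  proj_of_ne : ∀ g h, g ≠ h → ∀ x ∈ Dg g, p h x = 0
  exists_ne : ∀ g, ∃ x ∈ Dg g, x ≠ 0
  mul_mem : ∀ g h, ∀ x ∈ Dg g, ∀ y ∈ Dg h, x * y ∈ Dg (g * h)

namespace IsDivisionGrading

theorem of_faithful {𝕜 D G : Type*} [Field 𝕜] [DivisionRing D] [Algebra 𝕜 D] [Group G]
    [Fintype G] {Dg : G → Submodule 𝕜 D}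
    (hindep : iSupIndep Dg) (hsup : (⨆ g : G, Dg g) = ⊤)
    (hne : ∀ g : G, Dg g ≠ ⊥) (hmul : ∀ g h : G, Dg g * Dg h = Dg (g * h)) :
    ∃ p, IsDivisionGrading Dg p := by
  classical
  let dec := (DirectSum.isInternal_submodule_of_iSupIndep_of_iSup_eq_top hindep
    hsup).chooseDecomposition
  refine ⟨fun g => (Dg g).subtype ∘ₗ DirectSum.component 𝕜 G (fun g => Dg g) g ∘ₗ
    (DirectSum.decomposeLinearEquiv Dg).toLinearMap, ?_⟩
  have hp : ∀ g x, ((Dg g).subtype ∘ₗ DirectSum.component 𝕜 G (fun g => Dg g) g ∘ₗ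
    (DirectSum.decomposeLinearEquiv Dg).toLinearMap) x = DirectSum.decompose Dg x g :=
    fun g x => rfl
  constructor
  · intro g x
    rw [hp]
    exact Subtype.property _
  · intro x
    simp only [hp]
    conv_rhs => rw [← DirectSum.sum_support_decompose Dg x]
    symm
    apply Finset.sum_subset (Finset.subset_univ _)
    intro g _ hg
    simpa using hg
  · intro g x hx
    rw [hp, DirectSum.decompose_of_mem_same _ hx]
  · intro g h hgh x hx
    rw [hp, DirectSum.decompose_of_mem_ne _ hx hgh]
  · intro g
    exact Submodule.exists_mem_ne_zero_of_ne_bot (hne g)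
  · intro g h x hx y hy
    rw [← hmul]
    exact Submodule.mul_mem_mul hx hy

variable {𝕜 D G : Type*} [Field 𝕜] [DivisionRing D] [Algebra 𝕜 D] [Group G]
    [Fintype G] {Dg : G → Submodule 𝕜 D} {p : G → D →ₗ[𝕜] D}

theorem deg_unique (H : IsDivisionGrading Dg p) {g h : G} {x : D} (hg : x ∈ Dg g) (hh : x ∈ Dg h) (hx : x ≠ 0) : g = h := by
  by_contra hne
  apply hx
  rw [← H.proj_self h x hh, H.proj_of_ne g h hne x hg]

theorem proj_mul_left (H : IsDivisionGrading Dg p) {g h : G} {x : D} (hx : x ∈ Dg g) (y : D) :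
    p (g * h) (x * y) = x * p h y := by
  conv_lhs => rw [← H.sum_proj y, Finset.mul_sum, map_sum]
  rw [Finset.sum_eq_single h]
  · exact H.proj_self _ _ (H.mul_mem _ _ _ hx _ (H.proj_mem _ _))
  · intro k _ hk
    exact H.proj_of_ne _ _ (fun e => hk (mul_left_cancel e)) _
      (H.mul_mem _ _ _ hx _ (H.proj_mem _ _))
  · simp

theorem proj_mul_right (H : IsDivisionGrading Dg p) {g h : G} {x : D} (hx : x ∈ Dg g) (y : D) :
    p (h * g) (y * x) = p h y * x := by
  conv_lhs => rw [← H.sum_proj y, Finset.sum_mul, map_sum]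
  rw [Finset.sum_eq_single h]
  · exact H.proj_self _ _ (H.mul_mem _ _ _ (H.proj_mem _ _) _ hx)
  · intro k _ hk
    exact H.proj_of_ne _ _ (fun e => hk (mul_right_cancel e)) _
      (H.mul_mem _ _ _ (H.proj_mem _ _) _ hx)
  · simp

theorem one_mem (H : IsDivisionGrading Dg p) : (1 : D) ∈ Dg 1 := by
  obtain ⟨x, hx, hx0⟩ := H.exists_ne 1
  have h := H.proj_mul_right (h := 1) hx 1
  rw [mul_one, one_mul, H.proj_self _ _ hx] at h
  have : p 1 1 = 1 := mul_right_cancel₀ hx0 (by rw [← h, one_mul])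
  rw [← this]
  exact H.proj_mem _ _

theorem inv_mem (H : IsDivisionGrading Dg p) {g : G} {x : D} (hx : x ∈ Dg g) : x⁻¹ ∈ Dg g⁻¹ := by
  by_cases hx0 : x = 0
  · simp [hx0]
  have h := H.proj_mul_left (h := g⁻¹) hx x⁻¹
  rw [mul_inv_cancel₀ hx0, mul_inv_cancel, H.proj_self _ _ H.one_mem] at h
  rw [inv_eq_of_mul_eq_one_right h.symm]
  exact H.proj_mem _ _

theorem conj_mem (H : IsDivisionGrading Dg p) {g h : G} {x y : D} (hx : x ∈ Dg g) (hy : y ∈ Dg h) :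
    x * y * x⁻¹ ∈ Dg (g * h * g⁻¹) :=
  H.mul_mem _ _ _ (H.mul_mem _ _ _ hx _ hy) _ (H.inv_mem hx)

/-- The identity component `D_1`, a division subring of `D`. -/
def base (H : IsDivisionGrading Dg p) : Subfield D where
  carrier := Dg 1
  mul_mem' hx hy := by simpa using H.mul_mem 1 1 _ hx _ hy
  one_mem' := H.one_mem
  add_mem' hx hy := (Dg 1).add_mem hx hy
  zero_mem' := (Dg 1).zero_mem
  neg_mem' hx := (Dg 1).neg_mem hx
  inv_mem' x hx := by simpa using H.inv_mem hx

theorem mem_base (H : IsDivisionGrading Dg p) {x : D} : x ∈ H.base ↔ x ∈ Dg 1 := Iff.rfl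

/-- The centralizer `C` of the identity component `D_1`, a division subring of `D`. -/
def cent (Dg : G → Submodule 𝕜 D) : Subfield D where
  __ := Subring.centralizer (Dg 1 : Set D)
  inv_mem' _ hx := Set.inv_mem_centralizer₀ hx

/-- The centralizer of `D_1` is a graded subring. -/
theorem proj_mem_cent (H : IsDivisionGrading Dg p) {x : D} (hx : x ∈ cent Dg) (g : G) : p g x ∈ cent Dg := by
  intro y hy
  have h1 := H.proj_mul_left (h := g) hy x
  have h2 := H.proj_mul_right (h := g) hy x
  rw [one_mul] at h1
  rw [mul_one] at h2
  rw [← h1, ← h2, hx y hy]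

/-- Nonzero homogeneous elements normalize the centralizer of `D_1`. -/
theorem conj_mem_cent (H : IsDivisionGrading Dg p) {g : G} {x c : D} (hx : x ∈ Dg g) (hx0 : x ≠ 0) (hc : c ∈ cent Dg) :
    x * c * x⁻¹ ∈ cent Dg := by
  intro y hy
  have h := hc (x⁻¹ * y * x) (by
    have := H.conj_mem (H.inv_mem hx) hy
    simpa using this)
  have h2 := congrArg (fun t => x * t * x⁻¹) h
  simpa [mul_assoc, hx0] using h2

/-- Elements of `D_1` independent over `Z(D_1)` stay independent over `Z(D)`: each graded component of
`C` is at most one-dimensional over `Z(D_1)`, so projecting a relation with coefficients in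
`Z(D) ⊆ C` onto degree `g` gives a relation over `Z(D_1)`, multiplied by an element of `C` of degree `g`. -/
theorem linearIndependent_center (H : IsDivisionGrading Dg p) {ι : Type*} {b : ι → H.base}
    (hb : LinearIndependent (Subring.center H.base) b) :
    LinearIndependent (Subring.center D) (fun i => (b i : D)) := by
  classical
  rw [linearIndependent_iff'] at hb ⊢
  intro s z hz i hi
  have key : ∀ g, p g (z i : D) = 0 := by
    intro g
    by_cases hC : ∃ u ∈ Dg g, u ∈ cent Dg ∧ u ≠ 0
    swap
    · by_contra h
      exact hC ⟨_, H.proj_mem _ _,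
        H.proj_mem_cent (fun y _ => (Subring.mem_center_iff.1 (z i).2 y)) g, h⟩
    obtain ⟨u, hu, huC, hu0⟩ := hC
    have hk : ∀ i, ∃ k : Subring.center H.base, ((k : H.base) : D) * u = p g (z i : D) := by
      intro i
      have h1 : p g (z i : D) * u⁻¹ ∈ Dg 1 := by
        simpa using H.mul_mem _ _ _ (H.proj_mem g (z i : D)) _ (H.inv_mem hu)
      have h2 : p g (z i : D) * u⁻¹ ∈ cent Dg := (cent Dg).mul_mem
        (H.proj_mem_cent (fun y _ => (Subring.mem_center_iff.1 (z i).2 y)) g)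
        ((cent Dg).inv_mem huC)
      refine ⟨⟨⟨_, h1⟩, Subring.mem_center_iff.2 fun y => Subtype.ext (h2 y y.2)⟩, ?_⟩
      simp [hu0]
    choose k hk using hk
    have hsum : ∑ j ∈ s, k j • b j = 0 := by
      apply Subtype.ext
      apply mul_right_cancel₀ hu0
      have h1 := congrArg (p g) hz
      rw [map_sum, map_zero] at h1
      have h2 : ∀ j ∈ s, p g (z j • (b j : D)) = ((k j : H.base) : D) * (b j : D) * u := by
        intro j _
        have h3 := H.proj_mul_right (h := g) (b j).2 (z j : D)
        rw [mul_one] at h3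
        rw [Subring.smul_def, smul_eq_mul, h3, ← hk, mul_assoc, mul_assoc, huC _ (b j).2]
      rw [Finset.sum_congr rfl h2, ← Finset.sum_mul] at h1
      rw [ZeroMemClass.coe_zero, zero_mul, ← h1, AddSubmonoidClass.coe_finsetSum]
      rfl
    have := hb s k hsum i hi
    rw [← hk, this]
    simp
  apply Subtype.ext
  rw [← H.sum_proj (z i : D)]
  simp [key]

theorem finite_base (H : IsDivisionGrading Dg p) [Module.Finite (Subring.center D) D] :
    Module.Finite (Subring.center H.base) H.base := by
  by_contra hinf
  let b := Module.Basis.ofVectorSpace (Subring.center H.base) H.base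
  have := H.linearIndependent_center b.linearIndependent
  have : Finite (Module.Basis.ofVectorSpaceIndex (Subring.center H.base) H.base) := this.finite
  exact hinf (Module.Finite.of_basis b)

/-- If a homogeneous element of degree `g` commutes with `Z(D_1) = D_1 ∩ C`, then by Skolem–Noether
it can be multiplied by an element of `D_1` to centralize all of `D_1`. -/
theorem exists_mem_cent [Module.Finite (Subring.center D) D] (H : IsDivisionGrading Dg p)
    {g : G} {x : D} (hx : x ∈ Dg g) (hx0 : x ≠ 0)
    (hcomm : ∀ k ∈ Dg 1, k ∈ cent Dg → x * k = k * x) :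
    ∃ u ∈ Dg g, u ≠ 0 ∧ u ∈ cent Dg := by
  have hfin := H.finite_base
  let φ : H.base →ₐ[Subring.center H.base] H.base :=
    { toFun := fun y => ⟨x * y * x⁻¹, by simpa [mem_base] using H.conj_mem hx y.2⟩
      map_one' := Subtype.ext (by simp [hx0])
      map_mul' := fun a b => Subtype.ext (by simp [mul_assoc, hx0])
      map_zero' := Subtype.ext (by simp)
      map_add' := fun a b => Subtype.ext (by simp [mul_add, add_mul])
      commutes' := fun k => Subtype.ext (by
        change x * ((k : H.base) : D) * x⁻¹ = ((k : H.base) : D)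
        rw [hcomm _ (k : H.base).2 fun y hy =>
          congrArg Subtype.val (Subring.mem_center_iff.1 k.2 ⟨y, hy⟩)]
        simp [hx0]) }
  obtain ⟨a, ha0, ha⟩ := exists_mul_eq_algHom_mul (F := Subring.center H.base)
    (fun a h => ⟨⟨a, Subring.mem_center_iff.2 fun y => (h y).symm⟩, rfl⟩) φ
  have ha0' : (a : D) ≠ 0 := fun h => ha0 (Subtype.ext h)
  refine ⟨(a : D)⁻¹ * x, by simpa using H.mul_mem _ _ _ (H.inv_mem a.2) _ hx,
    mul_ne_zero (inv_ne_zero ha0') hx0, fun y hy => ?_⟩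
  have h : (a : D) * y = x * y * x⁻¹ * a := congrArg Subtype.val (ha ⟨y, hy⟩)
  have h2 := congrArg (fun t => (a : D)⁻¹ * t * ((a : D)⁻¹ * x)) h
  simpa [mul_assoc, ha0', hx0] using h2

/-! ### Commuting degrees -/

/-- The group of nonzero homogeneous elements of `C`. -/
def homogeneousUnits (H : IsDivisionGrading Dg p) : Subgroup Dˣ where
  carrier := {u | (∃ g, (u : D) ∈ Dg g) ∧ (u : D) ∈ cent Dg}
  mul_mem' := by
    rintro u v ⟨⟨g, hg⟩, hu⟩ ⟨⟨h, hh⟩, hv⟩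
    exact ⟨⟨g * h, by simpa using H.mul_mem _ _ _ hg _ hh⟩,
      by simpa using (cent Dg).mul_mem hu hv⟩
  one_mem' := ⟨⟨1, by simpa using H.one_mem⟩, by simp⟩
  inv_mem' := by
    rintro u ⟨⟨g, hg⟩, hu⟩
    exact ⟨⟨g⁻¹, by simpa using H.inv_mem hg⟩, by simpa using (cent Dg).inv_mem hu⟩

/-- Two homogeneous elements of `C` of equal degree differ by an element of `Z(D_1)`, which is central
in `C`; hence there are at most `|G|` cosets of the center. -/
theorem finiteIndex_center (H : IsDivisionGrading Dg p) :
    (Subgroup.center H.homogeneousUnits).FiniteIndex := by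
  choose deg hdeg using fun u : H.homogeneousUnits => u.2.1
  have : Finite (H.homogeneousUnits ⧸ Subgroup.center H.homogeneousUnits) := by
    refine Finite.of_injective (fun q => deg q.out) fun q r hqr => ?_
    rw [← q.out_eq', ← r.out_eq']
    refine QuotientGroup.eq.2 (Subgroup.mem_center_iff.2 fun v => ?_)
    have h1 : (((q.out)⁻¹ * r.out : H.homogeneousUnits) : Dˣ).val ∈ Dg 1 := by
      have h2 := H.mul_mem _ _ _ (H.inv_mem (hdeg q.out)) _ (hdeg r.out)
      dsimp only at hqr
      rw [hqr, inv_mul_cancel] at h2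
      simpa using h2
    exact Subtype.ext (Units.ext (v.2.2 _ h1).symm)
  exact Subgroup.finiteIndex_of_finite_quotient

theorem mem_range_of_pow_eq_one [IsAlgClosed 𝕜] {c : D} {n : ℕ} (hn : n ≠ 0) (hc : c ^ n = 1) :
    ∃ k : 𝕜, algebraMap 𝕜 D k = c := by
  have hint : IsIntegral 𝕜 c := ⟨Polynomial.X ^ n - 1, Polynomial.monic_X_pow_sub_C 1 hn, by
    simp [hc]⟩
  exact minpoly.mem_range_of_degree_eq_one 𝕜 c
    (IsAlgClosed.degree_eq_one_of_irreducible 𝕜 (minpoly.irreducible hint))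

/-- Degrees of nonzero homogeneous elements of `C` commute. The transfer to the center of the group of
homogeneous units is a power map with abelian target, so the commutator of `u` and `v` has finite
order and is a scalar in `𝕜`. Hence `u * v` is homogeneous of both degrees `g * h` and `h * g`. -/
theorem deg_comm [IsAlgClosed 𝕜] (H : IsDivisionGrading Dg p) {g h : G} {u v : D}
    (hu : u ∈ Dg g) (hv : v ∈ Dg h) (hu0 : u ≠ 0) (hv0 : v ≠ 0)
    (huC : u ∈ cent Dg) (hvC : v ∈ cent Dg) : g * h = h * g := by
  have := H.finiteIndex_center
  let U : H.homogeneousUnits := ⟨Units.mk0 u hu0, ⟨g, hu⟩, huC⟩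
  let V : H.homogeneousUnits := ⟨Units.mk0 v hv0, ⟨h, hv⟩, hvC⟩
  have hpow : (U * V * U⁻¹ * V⁻¹) ^ (Subgroup.center H.homogeneousUnits).index = 1 := by
    have h1 : MonoidHom.transferCenterPow H.homogeneousUnits (U * V * U⁻¹ * V⁻¹) = 1 := by
      rw [map_mul, map_mul, map_mul, map_inv, map_inv, mul_inv_eq_one, mul_inv_eq_iff_eq_mul]
      exact Subtype.ext (Subgroup.mem_center_iff.1 (Subtype.property _) _)
    rw [← MonoidHom.transferCenterPow_apply, h1]
    rfl
  have hpow' : (u * v * u⁻¹ * v⁻¹) ^ (Subgroup.center H.homogeneousUnits).index = 1 := by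
    have := congrArg (fun w : H.homogeneousUnits => ((w : Dˣ) : D)) hpow
    simpa [U, V] using this
  obtain ⟨k, hk⟩ := mem_range_of_pow_eq_one (𝕜 := 𝕜) Subgroup.FiniteIndex.index_ne_zero hpow'
  have huv : u * v = k • (v * u) := by
    rw [Algebra.smul_def, hk]
    simp [mul_assoc, hu0, hv0]
  refine H.deg_unique (H.mul_mem _ _ _ hu _ hv) ?_ (mul_ne_zero hu0 hv0)
  rw [huv]
  exact (Dg _).smul_mem _ (H.mul_mem _ _ _ hv _ hu)

/-! ### The action on the center of the centralizer -/

/-- Conjugation by a nonzero homogeneous element, as an automorphism of `C`. -/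
def conjCent (H : IsDivisionGrading Dg p) {g : G} {x : D} (hx : x ∈ Dg g) (hx0 : x ≠ 0) :
    cent Dg ≃+* cent Dg where
  toFun c := ⟨x * c * x⁻¹, H.conj_mem_cent hx hx0 c.2⟩
  invFun c := ⟨x⁻¹ * c * x, by
    simpa using H.conj_mem_cent (H.inv_mem hx) (inv_ne_zero hx0) c.2⟩
  left_inv c := Subtype.ext (by simp [mul_assoc, hx0])
  right_inv c := Subtype.ext (by simp [mul_assoc, hx0])
  map_mul' a b := Subtype.ext (by simp [mul_assoc, hx0])
  map_add' a b := Subtype.ext (by simp [mul_add, add_mul])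

/-- `Z(D)` is contained in `Z(C)`. -/
instance algebraCenterCent : Algebra (Subring.center D) (Subring.center (cent Dg)) :=
  RingHom.toAlgebra
    { toFun := fun z => ⟨⟨z, fun y _ => Subring.mem_center_iff.1 z.2 y⟩,
        Subring.mem_center_iff.2 fun y => Subtype.ext (Subring.mem_center_iff.1 z.2 y)⟩
      map_one' := rfl
      map_mul' := fun _ _ => rfl
      map_zero' := rfl
      map_add' := fun _ _ => rfl }

/-- The inclusion of the field `Z(C)` in `D`. -/
def centerCentVal (Dg : G → Submodule 𝕜 D) : Subring.center (cent Dg) →ₐ[Subring.center D] D where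
  toFun l := ((l : cent Dg) : D)
  map_one' := rfl
  map_mul' := fun _ _ => rfl
  map_zero' := rfl
  map_add' := fun _ _ => rfl
  commutes' := fun _ => rfl

/-- Conjugation on `C` by a homogeneous element depends only on the degree of that element. -/
theorem conj_eq_conj (H : IsDivisionGrading Dg p) {g : G} {x y c : D} (hx : x ∈ Dg g)
    (hy : y ∈ Dg g) (hx0 : x ≠ 0) (hy0 : y ≠ 0) (hc : c ∈ cent Dg) :
    x * c * x⁻¹ = y * c * y⁻¹ := by
  have h := hc (y⁻¹ * x) (by simpa using H.mul_mem _ _ _ (H.inv_mem hy) _ hx)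
  have h2 := congrArg (fun t => y * t * x⁻¹) h
  simpa [mul_assoc, hx0, hy0] using h2

/-- The automorphism of `Z(C)` over `Z(D)` given by conjugation by an element of degree `g`. -/
noncomputable def conjCenter (H : IsDivisionGrading Dg p) (g : G) :
    Subring.center (cent Dg) ≃ₐ[Subring.center D] Subring.center (cent Dg) :=
  AlgEquiv.ofRingEquiv
    (f := Subring.centerCongr (H.conjCent (H.exists_ne g).choose_spec.1
      (H.exists_ne g).choose_spec.2)) fun z => Subtype.ext (Subtype.ext (by
        change (H.exists_ne g).choose * (z : D) * (H.exists_ne g).choose⁻¹ = z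
        rw [Subring.mem_center_iff.1 z.2, mul_assoc,
          mul_inv_cancel₀ (H.exists_ne g).choose_spec.2, mul_one]))

theorem coe_conjCenter (H : IsDivisionGrading Dg p) {g : G} {x : D} (hx : x ∈ Dg g)
    (hx0 : x ≠ 0) (l : Subring.center (cent Dg)) :
    ((H.conjCenter g l : cent Dg) : D) = x * ((l : cent Dg) : D) * x⁻¹ :=
  H.conj_eq_conj (H.exists_ne g).choose_spec.1 hx (H.exists_ne g).choose_spec.2 hx0
    (l : cent Dg).2

/-- The action of `G` on the field `Z(C)` by conjugation with homogeneous elements. -/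
noncomputable def action (H : IsDivisionGrading Dg p) :
    G →* (Subring.center (cent Dg) ≃ₐ[Subring.center D] Subring.center (cent Dg)) :=
  MonoidHom.mk' H.conjCenter fun g h => AlgEquiv.ext fun l => Subtype.ext (Subtype.ext (by
    obtain ⟨x, hx, hx0⟩ := H.exists_ne g
    obtain ⟨y, hy, hy0⟩ := H.exists_ne h
    rw [AlgEquiv.mul_apply, H.coe_conjCenter (H.mul_mem _ _ _ hx _ hy) (mul_ne_zero hx0 hy0),
      H.coe_conjCenter hx hx0, H.coe_conjCenter hy hy0]
    simp [mul_assoc]))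

theorem action_ker_comm [IsAlgClosed 𝕜] [Module.Finite (Subring.center D) D]
    (H : IsDivisionGrading Dg p) {g h : G} (hg : g ∈ H.action.ker) (hh : h ∈ H.action.ker) :
    g * h = h * g := by
  have key : ∀ g ∈ H.action.ker, ∃ u ∈ Dg g, u ≠ 0 ∧ u ∈ cent Dg := by
    intro g hg
    obtain ⟨x, hx, hx0⟩ := H.exists_ne g
    refine H.exists_mem_cent hx hx0 fun k hk hkC => ?_
    let l : Subring.center (cent Dg) :=
      ⟨⟨k, hkC⟩, Subring.mem_center_iff.2 fun c => Subtype.ext (c.2 k hk).symm⟩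
    have h1 : H.conjCenter g l = l := DFunLike.congr_fun (MonoidHom.mem_ker.1 hg) l
    have h2 := H.coe_conjCenter hx hx0 l
    rw [h1] at h2
    exact ((eq_mul_inv_iff_mul_eq₀ hx0).1 h2).symm
  obtain ⟨u, hu, hu0, huC⟩ := key g hg
  obtain ⟨v, hv, hv0, hvC⟩ := key h hh
  exact H.deg_comm hu hv hu0 hv0 huC hvC

/-- The image of `G` in `Aut(Z(C)/Z(D))` has fixed field `Z(D)`: an element of `Z(C)` commuting with
all homogeneous elements is central in `D`. Artin's theorem gives the index of the kernel. -/
theorem index_action_ker [Module.Finite (Subring.center D) D] (H : IsDivisionGrading Dg p) :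
    H.action.ker.index = Module.finrank (Subring.center D) (Subring.center (cent Dg)) := by
  have hfin : FiniteDimensional (Subring.center D) (Subring.center (cent Dg)) :=
    FiniteDimensional.of_injective (centerCentVal Dg).toLinearMap
      (fun a b h => Subtype.ext (Subtype.ext h))
  rw [Subgroup.index_ker, ← IntermediateField.finrank_fixedField_eq_card]
  have hbot : IntermediateField.fixedField H.action.range = ⊥ := by
    rw [eq_bot_iff]
    intro l hl
    rw [IntermediateField.mem_fixedField_iff] at hl
    have hcomm : ∀ g, ∀ x ∈ Dg g, x * ((l : cent Dg) : D) = ((l : cent Dg) : D) * x := by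
      intro g x hx
      by_cases hx0 : x = 0
      · simp [hx0]
      have h1 : H.conjCenter g l = l := hl _ ⟨g, rfl⟩
      have h2 := H.coe_conjCenter hx hx0 l
      rw [h1] at h2
      exact ((eq_mul_inv_iff_mul_eq₀ hx0).1 h2).symm
    rw [IntermediateField.mem_bot]
    refine ⟨⟨((l : cent Dg) : D), Subring.mem_center_iff.2 fun y => ?_⟩, rfl⟩
    rw [← H.sum_proj y, Finset.sum_mul, Finset.mul_sum]
    exact Finset.sum_congr rfl fun g _ => hcomm g _ (H.proj_mem g y)
  rw [hbot, IntermediateField.finrank_bot']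

end IsDivisionGrading

/-- If a division algebra `D` of degree `d` over its center, containing an
algebraically closed field `𝕜` of characteristic zero, is faithfully graded by a
finite group `G`, then `G` has a normal abelian subgroup of index dividing `d`. -/
theorem normal_abelian_subgroup_of_faithful_grading
    (𝕜 : Type) [Field 𝕜] [IsAlgClosed 𝕜] [CharZero 𝕜]
    (D : Type) [DivisionRing D] [Algebra 𝕜 D]
    (G : Type) [Group G] [Finite G]
    (d : ℕ) (hd : 1 ≤ d)
    (hdeg : Module.finrank (Subring.center D) D = d ^ 2)
    (Dg : G → Submodule 𝕜 D)
    (hindep : iSupIndep Dg) (hsup : (⨆ g : G, Dg g) = ⊤)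
    (hne : ∀ g : G, Dg g ≠ ⊥)
    (hmul : ∀ g h : G, Dg g * Dg h = Dg (g * h)) :
    ∃ A : Subgroup G, A.Normal ∧ (∀ a b : A, a * b = b * a) ∧ A.index ∣ d := by
  have : Fintype G := Fintype.ofFinite G
  obtain ⟨p, H⟩ := IsDivisionGrading.of_faithful hindep hsup hne hmul
  have hfin : Module.Finite (Subring.center D) D :=
    Module.finite_of_finrank_pos (by rw [hdeg]; positivity)
  refine ⟨H.action.ker, inferInstance, fun a b => Subtype.ext (H.action_ker_comm a.2 b.2), ?_⟩
  rw [H.index_action_ker]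
  exact finrank_subfield_dvd
    (fun a h => ⟨⟨a, Subring.mem_center_iff.2 fun y => (h y).symm⟩, rfl⟩)
    (IsDivisionGrading.centerCentVal Dg) hd hdeg
end

section
/- Let 𝕜 be an algebraically closed field of characteristic zero and let D be a division ring which is a 𝕜-algebra (𝕜 central in D), faithfully graded by a finite group G with identity component D₁. Let C denote the centralizer of D₁ in D. Then C is a graded subalgebra, i.e. C = ⊕_{g∈G} (C ∩ D_g); the set A = {g ∈ G : C ∩ D_g ≠ 0} is a normal subgroup of G; and the decomposition C = ⊕_{a∈A} (C ∩ D_a) is a faithful grading of C by A. -/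
/-!
The homogeneous projections `y ↦ y_g` satisfy `(x y)_{ag} = x y_g` and `(y x)_{ga} = y_g x` for
`x ∈ D_a` (`decompose_mul_left`, `decompose_mul_right`). Three facts follow:

* taking `a = 1`, the homogeneous components of an element centralizing `D₁` centralize `D₁`,
  so the centralizer `C` is graded;
* `1 ∈ D₁` (`one_mem_identity_component`), because `x = x · 1` forces `x = x · 1₁` for homogeneous
  `x`, and `D` has no zero divisors;
* a nonzero `x ∈ D_g` has `x⁻¹ ∈ D_{g⁻¹}` (`inv_mem_component`), since `x · (x⁻¹)_{g⁻¹} = 1`.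

Hence the degrees of nonzero homogeneous elements of `C` form a subgroup `A`. Conjugation by a
nonzero `x ∈ D_g` preserves `D₁`, hence `C`, so `A` is normal. Finally, for a nonzero
`c ∈ C ∩ D_a`, every `z ∈ C ∩ D_{ab}` is `c · (c⁻¹ z)`, which gives faithfulness.
-/

section Graded

variable {𝕜 D G : Type} [Field 𝕜] [DivisionRing D] [Algebra 𝕜 D] [Group G] [DecidableEq G]
  {Dg : G → Submodule 𝕜 D} [DirectSum.Decomposition Dg]

open DirectSum

lemma decompose_mul_left (hsup : (⨆ g : G, Dg g) = ⊤)
    (hmul : ∀ g h : G, Dg g * Dg h = Dg (g * h)) {a : G} {x : D} (hx : x ∈ Dg a) (g : G) (y : D) :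
    (decompose Dg (x * y) (a * g) : D) = x * decompose Dg y g := by
  have hy : y ∈ ⨆ g : G, Dg g := hsup ▸ Submodule.mem_top
  induction hy using Submodule.iSup_induction' with
  | mem h y hy =>
    have hxy : x * y ∈ Dg (a * h) := hmul a h ▸ Submodule.mul_mem_mul hx hy
    by_cases e : h = g
    · subst e
      rw [decompose_of_mem_same _ hxy, decompose_of_mem_same _ hy]
    · rw [decompose_of_mem_ne _ hxy (by simpa using e), decompose_of_mem_ne _ hy e, mul_zero]
  | zero => simp
  | add y z _ _ h1 h2 => simp [mul_add, decompose_add, h1, h2]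

lemma decompose_mul_right (hsup : (⨆ g : G, Dg g) = ⊤)
    (hmul : ∀ g h : G, Dg g * Dg h = Dg (g * h)) {a : G} {x : D} (hx : x ∈ Dg a) (g : G) (y : D) :
    (decompose Dg (y * x) (g * a) : D) = decompose Dg y g * x := by
  have hy : y ∈ ⨆ g : G, Dg g := hsup ▸ Submodule.mem_top
  induction hy using Submodule.iSup_induction' with
  | mem h y hy =>
    have hxy : y * x ∈ Dg (h * a) := hmul h a ▸ Submodule.mul_mem_mul hy hx
    by_cases e : h = g
    · subst e
      rw [decompose_of_mem_same _ hxy, decompose_of_mem_same _ hy]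
    · rw [decompose_of_mem_ne _ hxy (by simpa using e), decompose_of_mem_ne _ hy e, zero_mul]
  | zero => simp
  | add y z _ _ h1 h2 => simp [add_mul, decompose_add, h1, h2]

lemma one_mem_identity_component (hsup : (⨆ g : G, Dg g) = ⊤) (hne : ∀ g : G, Dg g ≠ ⊥)
    (hmul : ∀ g h : G, Dg g * Dg h = Dg (g * h)) : (1 : D) ∈ Dg 1 := by
  obtain ⟨x, hx, hx0⟩ := Submodule.exists_mem_ne_zero_of_ne_bot (hne 1)
  have h := decompose_mul_left hsup hmul hx 1 1
  rw [mul_one, mul_one, decompose_of_mem_same _ hx] at h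
  have h1 : (decompose Dg (1 : D) 1 : D) = 1 := mul_left_cancel₀ hx0 (by rw [← h, mul_one])
  exact h1 ▸ SetLike.coe_mem (decompose Dg (1 : D) 1)

lemma inv_mem_component (hsup : (⨆ g : G, Dg g) = ⊤) (hne : ∀ g : G, Dg g ≠ ⊥)
    (hmul : ∀ g h : G, Dg g * Dg h = Dg (g * h)) {g : G} {x : D} (hx : x ∈ Dg g) (hx0 : x ≠ 0) :
    x⁻¹ ∈ Dg g⁻¹ := by
  have h := decompose_mul_left hsup hmul hx g⁻¹ x⁻¹
  rw [mul_inv_cancel₀ hx0, mul_inv_cancel,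
    decompose_of_mem_same _ (one_mem_identity_component hsup hne hmul)] at h
  have h1 : (decompose Dg x⁻¹ g⁻¹ : D) = x⁻¹ := mul_left_cancel₀ hx0 (by
    rw [← h, mul_inv_cancel₀ hx0])
  exact h1 ▸ SetLike.coe_mem (decompose Dg x⁻¹ g⁻¹)

end Graded

/-- Let a division algebra `D` over an algebraically closed field `𝕜` of characteristic
zero be faithfully graded by a finite group `G`, and let `C` be the centralizer of the
identity component `D₁`. Then `C` is a graded subalgebra, i.e. the sum of its homogeneous
parts `C ∩ D_g`; the set `A` of `g` with `C ∩ D_g ≠ 0` is a normal subgroup of `G`; and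
the decomposition of `C` along `A` is a faithful grading of `C` by `A`. -/
theorem centralizer_of_identity_component_graded
    (𝕜 : Type) [Field 𝕜] [IsAlgClosed 𝕜] [CharZero 𝕜]
    (D : Type) [DivisionRing D] [Algebra 𝕜 D]
    (G : Type) [Group G] [Finite G]
    (Dg : G → Submodule 𝕜 D)
    (hindep : iSupIndep Dg) (hsup : (⨆ g : G, Dg g) = ⊤)
    (hne : ∀ g : G, Dg g ≠ ⊥)
    (hmul : ∀ g h : G, Dg g * Dg h = Dg (g * h)) :
    ∀ C : Submodule 𝕜 D,
      C = Subalgebra.toSubmodule (Subalgebra.centralizer 𝕜 (Dg 1 : Set D)) →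
      (⨆ g : G, C ⊓ Dg g) = C ∧
      iSupIndep (fun g : G => C ⊓ Dg g) ∧
      ∃ A : Subgroup G,
        A.Normal ∧
        (A : Set G) = {g : G | C ⊓ Dg g ≠ ⊥} ∧
        (∀ a b : G, a ∈ A → b ∈ A → (C ⊓ Dg a) * (C ⊓ Dg b) = C ⊓ Dg (a * b)) := by
  classical
  rintro C rfl
  set C := Subalgebra.centralizer 𝕜 (Dg 1 : Set D) with hC
  have : DirectSum.Decomposition Dg :=
    (DirectSum.isInternal_submodule_of_iSupIndep_of_iSup_eq_top hindep hsup).chooseDecomposition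
  have memC : ∀ z : D, z ∈ C ↔ ∀ y ∈ Dg 1, y * z = z * y := fun z =>
    Subalgebra.mem_centralizer_iff 𝕜
  have mulmem : ∀ {g h : G} {x y : D}, x ∈ Dg g → y ∈ Dg h → x * y ∈ Dg (g * h) :=
    fun {g h} _ _ hx hy => hmul g h ▸ Submodule.mul_mem_mul hx hy
  have invmem : ∀ {g : G} {x : D}, x ∈ Dg g → x ≠ 0 → x⁻¹ ∈ Dg g⁻¹ :=
    fun hx hx0 => inv_mem_component hsup hne hmul hx hx0
  have invC : ∀ {x : D}, x ∈ C → x⁻¹ ∈ C := fun hx => Set.inv_mem_centralizer₀ hx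
  have exA : ∀ g : G, Subalgebra.toSubmodule C ⊓ Dg g ≠ ⊥ ↔ ∃ c, c ∈ C ∧ c ∈ Dg g ∧ c ≠ 0 := by
    intro g
    simp [Submodule.ne_bot_iff, and_assoc]
  refine ⟨le_antisymm (iSup_le fun g => inf_le_left) ?_,
    hindep.mono fun g => inf_le_right,
    { carrier := {g : G | Subalgebra.toSubmodule C ⊓ Dg g ≠ ⊥}
      one_mem' := (exA 1).2 ⟨1, one_mem C, one_mem_identity_component hsup hne hmul, one_ne_zero⟩
      mul_mem' := ?_
      inv_mem' := ?_ }, ⟨?_⟩, rfl, ?_⟩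
  · intro z hz
    rw [← DirectSum.sum_support_decompose Dg z]
    refine sum_mem fun g _ => Submodule.mem_iSup_of_mem g ⟨?_, SetLike.coe_mem _⟩
    refine (memC _).2 fun y hy => ?_
    have h1 := decompose_mul_left hsup hmul hy g z
    have h2 := decompose_mul_right hsup hmul hy g z
    rw [one_mul] at h1
    rw [mul_one] at h2
    rw [← h1, ← h2, (memC z).1 hz y hy]
  · intro a b ha hb
    obtain ⟨c, hc, hca, hc0⟩ := (exA a).1 ha
    obtain ⟨d, hd, hdb, hd0⟩ := (exA b).1 hb
    exact (exA _).2 ⟨c * d, mul_mem hc hd, mulmem hca hdb, mul_ne_zero hc0 hd0⟩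
  · intro a ha
    obtain ⟨c, hc, hca, hc0⟩ := (exA a).1 ha
    exact (exA _).2 ⟨c⁻¹, invC hc, invmem hca hc0, inv_ne_zero hc0⟩
  · intro a ha g
    obtain ⟨c, hc, hca, hc0⟩ := (exA a).1 ha
    obtain ⟨x, hx, hx0⟩ := Submodule.exists_mem_ne_zero_of_ne_bot (hne g)
    refine (exA _).2 ⟨x * c * x⁻¹, (memC _).2 fun y hy => ?_, mulmem (mulmem hx hca) (invmem hx hx0),
      mul_ne_zero (mul_ne_zero hx0 hc0) (inv_ne_zero hx0)⟩
    -- `c` commutes with the conjugate `x⁻¹ * y * x`, which lies again in `Dg 1`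
    have hy' : x⁻¹ * y * x ∈ Dg 1 := by
      simpa using mulmem (mulmem (invmem hx hx0) hy) hx
    calc y * (x * c * x⁻¹) = x * ((x⁻¹ * y * x) * c) * x⁻¹ := by simp [mul_assoc, hx0]
      _ = x * (c * (x⁻¹ * y * x)) * x⁻¹ := by rw [(memC c).1 hc _ hy']
      _ = x * c * x⁻¹ * y := by simp [mul_assoc, hx0]
  · intro a b ha _
    refine le_antisymm (Submodule.mul_le.2 fun x hx y hy =>
      ⟨mul_mem (S := Subalgebra 𝕜 D) (s := C) hx.1 hy.1, mulmem hx.2 hy.2⟩) ?_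
    rintro z ⟨hz, hzab⟩
    obtain ⟨c, hc, hca, hc0⟩ := (exA a).1 ha
    have h := mulmem (invmem hca hc0) hzab
    rw [inv_mul_cancel_left] at h
    rw [← mul_inv_cancel_left₀ hc0 z]
    exact Submodule.mul_mem_mul ⟨hc, hca⟩
      ⟨mul_mem (S := Subalgebra 𝕜 D) (s := C) (invC hc) hz, h⟩
end

section
/- Let 𝕜 be a field of characteristic zero, and let 𝕜 ⊆ K ⊆ L be fields with L/K a finite Galois extension with Galois group H. Let V be a finite-dimensional 𝕜-vector space equipped with a 𝕜-linear action of H, and let H act on L ⊗_𝕜 V diagonally (by the Galois action on L and the given action on V). Then the natural K-linear map L ⊗_K (L ⊗_𝕜 V)^H → L ⊗_𝕜 V, sending l ⊗ w to (l ⊗ 1)·w (multiplication by l in the first tensor factor), is bijective. In particular, dim_K (L ⊗_𝕜 V)^H = dim_𝕜 V. -/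
/-!
Galois descent with an explicit inverse. Let `b` be a `K`-basis of `L` and `b'` its dual basis for
the trace form, and let `T w = ∑ h, h • w` be the averaging map from `L ⊗[𝕜] V` to the
invariants. The inverse of `l ⊗ w ↦ l • w` is `w ↦ ∑ i, b i ⊗ T (b' i • w)`.

On one side, `T (x • w) = Tr x • w` for invariant `w`, so the composite sends `l ⊗ w` to
`(∑ i, Tr (b' i * l) • b i) ⊗ w = l ⊗ w`. On the other side,
`∑ i, b i • T (b' i • w) = ∑ h, (∑ i, b i * h (b' i)) • (h • w)`, and the inner sum is `1` for
`h = 1` and `0` otherwise (`sum_basis_mul_traceDual`). The latter holds because the square matrices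
`(h (b' i))` and `(h (b i))` are inverse to each other on one side by duality, hence on both.

The dimension formula follows since the natural map is in fact `L`-linear.
-/

open TensorProduct

variable (𝕜 K L : Type*) [Field 𝕜] [Field K] [Field L]
  [Algebra 𝕜 K] [Algebra K L] [Algebra 𝕜 L] [IsScalarTower 𝕜 K L]
  (V : Type*) [AddCommGroup V] [Module 𝕜 V]
  (ρ : Representation 𝕜 (L ≃ₐ[K] L) V)

/-- The diagonal action of `h ∈ Gal(L/K)` on `L ⊗[𝕜] V`: `h • (l ⊗ v) = h l ⊗ h • v`. -/
noncomputable def diagAction (h : L ≃ₐ[K] L) : L ⊗[𝕜] V →ₗ[𝕜] L ⊗[𝕜] V :=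
  TensorProduct.map (h.restrictScalars 𝕜).toLinearMap (ρ h)

lemma diagAction_smul (h : L ≃ₐ[K] L) (l : L) (w : L ⊗[𝕜] V) :
    diagAction 𝕜 K L V ρ h (l • w) = h l • diagAction 𝕜 K L V ρ h w := by
  induction w using TensorProduct.induction_on with
  | zero => simp
  | tmul x v =>
      simp only [smul_tmul', diagAction, TensorProduct.map_tmul]
      simp [smul_tmul', smul_eq_mul, map_mul]
  | add w₁ w₂ h₁ h₂ => simp only [smul_add, map_add, h₁, h₂]

/-- The `K`-subspace `(L ⊗_𝕜 V)^H` of invariants under the diagonal Galois action. -/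
noncomputable def diagInvariants : Submodule K (L ⊗[𝕜] V) where
  carrier := {w | ∀ h : L ≃ₐ[K] L, diagAction 𝕜 K L V ρ h w = w}
  add_mem' := fun ha hb h => by rw [map_add, ha h, hb h]
  zero_mem' := fun h => by rw [map_zero]
  smul_mem' := by
    intro k w hw h
    rw [← algebraMap_smul L k w, diagAction_smul, hw h, AlgEquiv.commutes,
      algebraMap_smul]

/-- The natural `K`-linear map `L ⊗_K (L ⊗_𝕜 V)^H → L ⊗_𝕜 V`, `l ⊗ w ↦ l • w`. -/
noncomputable def diagNatMap : L ⊗[K] (diagInvariants 𝕜 K L V ρ) →ₗ[K] L ⊗[𝕜] V :=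
  TensorProduct.lift (LinearMap.mk₂ K
    (fun (l : L) (w : diagInvariants 𝕜 K L V ρ) => l • (w : L ⊗[𝕜] V))
    (fun l₁ l₂ w => add_smul l₁ l₂ _)
    (fun k l w => smul_assoc k l _)
    (fun l w₁ w₂ => by
      show l • ((w₁ + w₂ : diagInvariants 𝕜 K L V ρ) : L ⊗[𝕜] V) = _
      rw [Submodule.coe_add, smul_add])
    (fun k l w => by
      show l • ((k • w : diagInvariants 𝕜 K L V ρ) : L ⊗[𝕜] V) = k • (l • (w : L ⊗[𝕜] V))
      rw [SetLike.val_smul, smul_comm]))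

variable {K L} in
/-- Dual orthogonality: the trace-dual basis separates the identity from the other
automorphisms. -/
lemma sum_basis_mul_traceDual [FiniteDimensional K L] [IsGalois K L]
    {ι : Type*} [Fintype ι] [DecidableEq ι] [DecidableEq (L ≃ₐ[K] L)]
    (b : Module.Basis ι K L) (h : L ≃ₐ[K] L) :
    ∑ i, b i * h (b.traceDual i) = if 1 = h then 1 else 0 := by
  let M : Matrix ι (L ≃ₐ[K] L) L := .of fun i h => h (b.traceDual i)
  let N : Matrix (L ≃ₐ[K] L) ι L := .of fun h i => h (b i)
  have hMN : M * N = 1 := by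
    ext i j
    have key := congrArg (algebraMap K L) (b.trace_traceDual_mul i j)
    rw [trace_eq_sum_automorphisms] at key
    simp only [map_mul] at key
    simp only [Matrix.mul_apply, M, N, Matrix.of_apply, key, Matrix.one_apply, eq_comm (a := i)]
    split_ifs <;> simp
  have hcard : Fintype.card ι = Fintype.card (L ≃ₐ[K] L) := by
    rw [← Nat.card_eq_fintype_card (α := L ≃ₐ[K] L), IsGalois.card_aut_eq_finrank,
      Module.finrank_eq_card_basis b]
  have hNM : N * M = 1 := (Matrix.mul_eq_one_comm_of_equiv (Fintype.equivOfCardEq hcard)).mp hMN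
  have key := congrFun (congrFun hNM 1) h
  simpa [Matrix.mul_apply, M, N, Matrix.one_apply] using key

lemma diagAction_one (w : L ⊗[𝕜] V) : diagAction 𝕜 K L V ρ 1 w = w := by
  induction w using TensorProduct.induction_on with
  | zero => simp
  | tmul x v => simp [diagAction]
  | add w₁ w₂ h₁ h₂ => simp only [map_add, h₁, h₂]

lemma diagAction_mul (g h : L ≃ₐ[K] L) (w : L ⊗[𝕜] V) :
    diagAction 𝕜 K L V ρ (g * h) w = diagAction 𝕜 K L V ρ g (diagAction 𝕜 K L V ρ h w) := by
  induction w using TensorProduct.induction_on with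
  | zero => simp
  | tmul x v => simp [diagAction]
  | add w₁ w₂ h₁ h₂ => simp only [map_add, h₁, h₂]

/-- The (unnormalised) averaging map `w ↦ ∑ h, h • w` from `L ⊗[𝕜] V` to the invariants. -/
noncomputable def diagAverage [FiniteDimensional K L] :
    L ⊗[𝕜] V →+ diagInvariants 𝕜 K L V ρ where
  toFun w := ⟨∑ h : L ≃ₐ[K] L, diagAction 𝕜 K L V ρ h w, fun g => by
    rw [map_sum]
    simp only [← diagAction_mul]
    exact Fintype.sum_equiv (Equiv.mulLeft g) _ _ fun _ => rfl⟩
  map_zero' := by ext; simp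
  map_add' w₁ w₂ := by ext; simp [Finset.sum_add_distrib]

lemma diagAverage_smul_invariant [FiniteDimensional K L] [IsGalois K L] (l : L)
    (w : diagInvariants 𝕜 K L V ρ) :
    diagAverage 𝕜 K L V ρ (l • (w : L ⊗[𝕜] V)) = Algebra.trace K L l • w := by
  ext
  change ∑ h : L ≃ₐ[K] L, diagAction 𝕜 K L V ρ h (l • (w : L ⊗[𝕜] V)) =
    Algebra.trace K L l • (w : L ⊗[𝕜] V)
  rw [← algebraMap_smul L (Algebra.trace K L l), trace_eq_sum_automorphisms, Finset.sum_smul]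
  exact Finset.sum_congr rfl fun h _ => by rw [diagAction_smul, w.2 h]

lemma diagNatMap_tmul (l : L) (w : diagInvariants 𝕜 K L V ρ) :
    diagNatMap 𝕜 K L V ρ (l ⊗ₜ w) = l • (w : L ⊗[𝕜] V) := rfl

lemma diagNatMap_smul (l : L) (x : L ⊗[K] diagInvariants 𝕜 K L V ρ) :
    diagNatMap 𝕜 K L V ρ (l • x) = l • diagNatMap 𝕜 K L V ρ x := by
  induction x using TensorProduct.induction_on with
  | zero => simp
  | tmul y w => rw [smul_tmul', diagNatMap_tmul, diagNatMap_tmul, smul_assoc]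
  | add x₁ x₂ h₁ h₂ => simp only [smul_add, map_add, h₁, h₂]

lemma diagNatMap_bijective_aux [FiniteDimensional K L] [IsGalois K L] :
    Function.Bijective (diagNatMap 𝕜 K L V ρ) := by
  classical
  let b := Module.finBasis K L
  let g : L ⊗[𝕜] V → L ⊗[K] diagInvariants 𝕜 K L V ρ := fun w =>
    ∑ i, b i ⊗ₜ[K] diagAverage 𝕜 K L V ρ (b.traceDual i • w)
  refine Function.bijective_iff_has_inverse.mpr ⟨g, fun x => ?_, fun w => ?_⟩
  · induction x using TensorProduct.induction_on with
    | zero => simp [g]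
    | tmul l w =>
      have expand : ∑ i, Algebra.trace K L (b.traceDual i * l) • b i = l := by
        conv_rhs => rw [← b.sum_repr l]
        refine Finset.sum_congr rfl fun i _ => ?_
        have key := b.traceDual.traceDual_repr_apply l i
        rw [Module.Basis.traceDual_traceDual] at key
        rw [key, Algebra.traceForm_apply, mul_comm]
      simp only [g, diagNatMap_tmul, ← mul_smul, diagAverage_smul_invariant]
      simp only [tmul_smul, smul_tmul', ← sum_tmul, expand]
    | add x₁ x₂ h₁ h₂ =>
      have hadd : ∀ w₁ w₂, g (w₁ + w₂) = g w₁ + g w₂ := fun w₁ w₂ => by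
        simp only [g, smul_add, map_add, tmul_add, Finset.sum_add_distrib]
      rw [map_add, hadd, h₁, h₂]
  · simp only [g, map_sum, diagNatMap_tmul]
    change ∑ i, b i • ∑ h : L ≃ₐ[K] L, diagAction 𝕜 K L V ρ h (b.traceDual i • w) = w
    simp only [Finset.smul_sum, diagAction_smul, ← mul_smul]
    rw [Finset.sum_comm]
    simp only [← Finset.sum_smul, sum_basis_mul_traceDual b, ite_smul, one_smul, zero_smul,
      Finset.sum_ite_eq, Finset.mem_univ, if_true, diagAction_one]

/-- Galois descent: for a finite Galois extension `L/K` of fields containing `𝕜`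
(char. zero) and a `𝕜`-linear representation `V` of `H = Gal(L/K)`, the natural map
`L ⊗_K (L ⊗_𝕜 V)^H → L ⊗_𝕜 V` is bijective; in particular
`dim_K (L ⊗_𝕜 V)^H = dim_𝕜 V`. -/
theorem diagNatMap_bijective [CharZero 𝕜] [FiniteDimensional K L] [IsGalois K L]
    [FiniteDimensional 𝕜 V] :
    Function.Bijective (diagNatMap 𝕜 K L V ρ) ∧
    Module.finrank K (diagInvariants 𝕜 K L V ρ) = Module.finrank 𝕜 V := by
  have hbij := diagNatMap_bijective_aux 𝕜 K L V ρ
  refine ⟨hbij, ?_⟩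
  let f : L ⊗[K] diagInvariants 𝕜 K L V ρ →ₗ[L] L ⊗[𝕜] V :=
    { toFun := diagNatMap 𝕜 K L V ρ
      map_add' := map_add _
      map_smul' := diagNatMap_smul 𝕜 K L V ρ }
  -- The additive structure on the invariants is only found as a commutative monoid.
  have : Module.Free K (diagInvariants 𝕜 K L V ρ) :=
    letI := Module.addCommMonoidToAddCommGroup K (M := diagInvariants 𝕜 K L V ρ)
    Module.Free.of_divisionRing K (diagInvariants 𝕜 K L V ρ)
  rw [← Module.finrank_baseChange (R := L) (M' := diagInvariants 𝕜 K L V ρ),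
    ← Module.finrank_baseChange (R := L) (M' := V)]
  exact (LinearEquiv.ofBijective f hbij).finrank_eq
end
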